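/- Let K be a reduced simplicial set (K has exactly one 0-simplex). Then the principal twisted cartesian product G(K) ×_τ K, formed with the canonical twisting function τ : K → G(K), is acyclic: its geometric realization |G(K) ×_τ K| is weakly contractible, i.e. all of its homotopy groups are trivial. -/

import Mathlib

open CategoryTheory Simplicial

namespace HopfModel

/-- A map of simplicial sets is a *Kan fibration* if it has the right lifting property
with respect to all horn inclusions `Λ[n, k] ⟶ Δ[n]` for `n ≥ 1`, `0 ≤ k ≤ n`. -/
def IsKanFibration {X Y : SSet} (p : X ⟶ Y) : Prop :=
  ∀ (n : ℕ) (i : Fin (n + 2)), HasLiftingProperty (SSet.horn (n + 1) i).ι p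

/-- The underlying simplicial set of a simplicial group. -/
def uSSet (H : SimplicialObject GrpCat) : SSet := H ⋙ forget GrpCat

/-- The `i`-th face map of a simplicial group, as a group homomorphism. -/
def δHom (H : SimplicialObject GrpCat) {n : ℕ} (i : Fin (n + 2)) :
    (H _⦋n + 1⦌ : Type) →* (H _⦋n⦌ : Type) := (H.δ i).hom

/-- The `i`-th degeneracy map of a simplicial group, as a group homomorphism. -/
def σHom (H : SimplicialObject GrpCat) {n : ℕ} (i : Fin (n + 1)) :
    (H _⦋n⦌ : Type) →* (H _⦋n + 1⦌ : Type) := (H.σ i).hom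

/-- A twisting function `ζ : B → H`, i.e. a family of maps `ζₙ : Bₙ → H_{n-1}` (`n ≥ 1`)
satisfying `∂₀ζ(b) = (ζ(∂₀b))⁻¹·ζ(∂₁b)`, `∂ᵢζ(b) = ζ(∂_{i+1}b)` for `i > 0`,
`sᵢζ(b) = ζ(s_{i+1}b)` for `i ≥ 0`, and `ζ(s₀b) = e`. -/
structure TwistingFunction (B : SSet) (H : SimplicialObject GrpCat) where
  map : ∀ n : ℕ, B _⦋n + 1⦌ → H _⦋n⦌
  map_δ₀ : ∀ (n : ℕ) (b : B _⦋n + 2⦌),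
    H.δ 0 (map (n + 1) b) = (map n (B.δ 0 b))⁻¹ * map n (B.δ 1 b)
  map_δ : ∀ (n : ℕ) (j : Fin (n + 1)) (b : B _⦋n + 2⦌),
    H.δ j.succ (map (n + 1) b) = map n (B.δ j.succ.succ b)
  map_σ : ∀ (n : ℕ) (i : Fin (n + 1)) (b : B _⦋n + 1⦌),
    H.σ i (map n b) = map (n + 1) (B.σ i.succ b)
  map_σ₀ : ∀ (n : ℕ) (b : B _⦋n⦌), map n (B.σ 0 b) = 1

/-- A left action of a simplicial group `H` on a simplicial set `F`:
a degreewise group action commuting with faces and degeneracies. -/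
structure SimplicialAction (H : SimplicialObject GrpCat) (F : SSet) where
  act : ∀ n : ℕ, H _⦋n⦌ → F _⦋n⦌ → F _⦋n⦌
  one_act : ∀ (n : ℕ) (f : F _⦋n⦌), act n 1 f = f
  mul_act : ∀ (n : ℕ) (g h : H _⦋n⦌) (f : F _⦋n⦌),
    act n (g * h) f = act n g (act n h f)
  δ_act : ∀ (n : ℕ) (i : Fin (n + 2)) (g : H _⦋n + 1⦌) (f : F _⦋n + 1⦌),
    F.δ i (act (n + 1) g f) = act n (H.δ i g) (F.δ i f)
  σ_act : ∀ (n : ℕ) (i : Fin (n + 1)) (g : H _⦋n⦌) (f : F _⦋n⦌),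
    F.σ i (act n g f) = act (n + 1) (H.σ i g) (F.σ i f)

/-- A simplicial group acting on (the underlying simplicial set of) itself
by left multiplication. -/
def leftMulAction (H : SimplicialObject GrpCat) : SimplicialAction H (uSSet H) where
  act n g h := g * (show (H _⦋n⦌ : Type) from h)
  one_act n f := one_mul (show (H _⦋n⦌ : Type) from f)
  mul_act n g h f := mul_assoc g h (show (H _⦋n⦌ : Type) from f)
  δ_act n i g f := map_mul (δHom H i) g (show (H _⦋n + 1⦌ : Type) from f)
  σ_act n i g f := map_mul (σHom H i) g (show (H _⦋n⦌ : Type) from f)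

/-- The data exhibiting a simplicial set `P`, together with a map `p : P ⟶ B`, as
the twisted cartesian product `F ×_ζ B` with its projection onto `B`:
`Pₙ ≅ Fₙ × Bₙ`, `∂₀(f,b) = (ζ(b)·∂₀f, ∂₀b)`, `∂ᵢ(f,b) = (∂ᵢf, ∂ᵢb)` for `i > 0`,
`sᵢ(f,b) = (sᵢf, sᵢb)`, and `p(f,b) = b`. -/
structure TCP (H : SimplicialObject GrpCat) (F B : SSet) (A : SimplicialAction H F)
    (ζ : TwistingFunction B H) (P : SSet) (p : P ⟶ B) where
  e : ∀ n : ℕ, P _⦋n⦌ ≃ F _⦋n⦌ × B _⦋n⦌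
  e_δ₀ : ∀ (n : ℕ) (x : P _⦋n + 1⦌),
    e n (P.δ 0 x) =
      (A.act n (ζ.map n (e (n + 1) x).2) (F.δ 0 (e (n + 1) x).1), B.δ 0 (e (n + 1) x).2)
  e_δ : ∀ (n : ℕ) (j : Fin (n + 1)) (x : P _⦋n + 1⦌),
    e n (P.δ j.succ x) = (F.δ j.succ (e (n + 1) x).1, B.δ j.succ (e (n + 1) x).2)
  e_σ : ∀ (n : ℕ) (i : Fin (n + 1)) (x : P _⦋n⦌),
    e (n + 1) (P.σ i x) = (F.σ i (e n x).1, B.σ i (e n x).2)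
  proj : ∀ (n : ℕ) (x : P _⦋n⦌),
    p.app (Opposite.op (SimplexCategory.mk n)) x = (e n x).2

end HopfModel

namespace HopfModel

/-- The relations `s₀x = e` (`x ∈ Kₙ`) defining the loop group `G(K)ₙ`. -/
def loopRels (K : SSet) (n : ℕ) : Set (FreeGroup (K _⦋n + 1⦌)) :=
  Set.range fun x : K _⦋n⦌ => FreeGroup.of (K.σ 0 x)

end HopfModel

namespace HopfModel

open unitInterval in
theorem genLoop_homotopic_of {N X : Type} [TopologicalSpace X] {x : X} (f g : GenLoop N X x)
    (F : I × (N → I) → X) (hF : Continuous F) (h0 : ∀ s, F (0, s) = f s)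
    (h1 : ∀ s, F (1, s) = g s) (hb : ∀ t, ∀ s ∈ Cube.boundary N, F (t, s) = x) :
    GenLoop.Homotopic f g := by
  refine ⟨⟨⟨⟨F, hF⟩, h0, h1⟩, ?_⟩⟩
  intro t s hs
  exact (hb t s hs).trans (f.2 s hs).symm

open unitInterval in
theorem cube_reparam (n : ℕ) : ∃ (φ : I → (Fin n → I) → (Fin n → I)) (lam : (Fin n → I) → I),
    Continuous (fun q : I × (Fin n → I) => φ q.1 q.2) ∧ (∀ s, φ 0 s = s) ∧
    (∀ w, ∀ s ∈ Cube.boundary (Fin n), φ w s ∈ Cube.boundary (Fin n)) ∧ Continuous lam ∧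
    (∀ s ∈ Cube.boundary (Fin n), lam s = 0) ∧
    (∀ s, lam s = 1 ∨ φ 1 s ∈ Cube.boundary (Fin n)) := by
  let φ : I → (Fin n → I) → (Fin n → I) := fun w s i =>
    Set.projIcc (0:ℝ) 1 zero_le_one ((1 + 2 * (w:ℝ)) * (s i : ℝ) - w)
  have hφ : Continuous (fun q : I × (Fin n → I) => φ q.1 q.2) := by
    refine continuous_pi fun i => continuous_projIcc.comp ?_
    fun_prop
  have hφ0 : ∀ s, φ 0 s = s := by
    intro s; funext i
    simp [φ]
  have hφb : ∀ w, ∀ s ∈ Cube.boundary (Fin n), φ w s ∈ Cube.boundary (Fin n) := by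
    rintro w s ⟨i, hi⟩
    refine ⟨i, ?_⟩
    rcases hi with hi | hi
    · left
      simp only [φ, hi]
      apply Set.projIcc_of_le_left
      have := w.2.1
      simp [this]
    · right
      simp only [φ, hi]
      apply Set.projIcc_of_right_le
      have := w.2.1
      simp; linarith
  let lam0 : (Fin n → I) → ℝ := fun s => ∏ i, min 1 (3 * min (s i : ℝ) (1 - s i))
  have hl0 : ∀ s, 0 ≤ lam0 s := fun s => Finset.prod_nonneg fun i _ => by
    have := (s i).2.1
    have := (s i).2.2
    refine le_min zero_le_one (mul_nonneg (by norm_num) (le_min (by linarith) (by linarith)))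
  have hl1 : ∀ s, lam0 s ≤ 1 := fun s => Finset.prod_le_one (fun i _ => by
    have := (s i).2.1
    have := (s i).2.2
    refine le_min zero_le_one (mul_nonneg (by norm_num) (le_min (by linarith) (by linarith))))
    (fun i _ => min_le_left _ _)
  let lam : (Fin n → I) → I := fun s => ⟨lam0 s, hl0 s, hl1 s⟩
  have hlam : Continuous lam := by
    refine Continuous.subtype_mk ?_ _
    fun_prop
  have hlamb : ∀ s ∈ Cube.boundary (Fin n), lam s = 0 := by
    rintro s ⟨i, hi⟩
    apply Subtype.ext
    refine Finset.prod_eq_zero (Finset.mem_univ i) ?_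
    rcases hi with hi | hi <;> simp [hi]
  have hlam1 : ∀ s, lam s = 1 ∨ φ 1 s ∈ Cube.boundary (Fin n) := by
    intro s
    by_cases h : ∀ i, (1:ℝ) ≤ 3 * min (s i : ℝ) (1 - s i)
    · left
      apply Subtype.ext
      show lam0 s = 1
      exact Finset.prod_eq_one fun i _ => min_eq_left (h i)
    · right
      push Not at h
      obtain ⟨i, hi⟩ := h
      refine ⟨i, ?_⟩
      rcases le_total (s i : ℝ) (1 - s i) with h' | h'
      · left
        apply Set.projIcc_of_le_left
        rw [min_eq_left h'] at hi
        simp; linarith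
      · right
        apply Set.projIcc_of_right_le
        rw [min_eq_right h'] at hi
        simp; linarith
  exact ⟨φ, lam, hφ, hφ0, hφb, hlam, hlamb, hlam1⟩

open unitInterval in
theorem subsingleton_homotopyGroup {X : Type} [TopologicalSpace X] (x0 : X)
    (H : X × I → X) (hH : Continuous H) (hH0 : ∀ y, H (y, 0) = y) (hH1 : ∀ y, H (y, 1) = x0)
    (n : ℕ) (x : X) : Subsingleton (HomotopyGroup (Fin n) X x) := by
  obtain ⟨φ, lam, hφ, hφ0, hφb, hlam, hlamb, hlam1⟩ := cube_reparam n
  have key : ∀ γ : GenLoop (Fin n) X x, GenLoop.Homotopic γ GenLoop.const := by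
    intro γ
    have hγ := γ.1.continuous
    let γ1 : GenLoop (Fin n) X x := ⟨⟨fun s => γ (φ 1 s), hγ.comp (hφ.comp (by fun_prop : Continuous fun s => ((1 : I), s)))⟩,
      fun s hs => γ.2 _ (hφb _ _ hs)⟩
    let γ2 : GenLoop (Fin n) X x := ⟨⟨fun s => H (x, lam s), hH.comp (by fun_prop)⟩,
      fun s hs => by show H (x, lam s) = x; rw [hlamb s hs, hH0]⟩
    have e1 : GenLoop.Homotopic γ γ1 := genLoop_homotopic_of _ _ (fun q => γ (φ q.1 q.2))
      (hγ.comp hφ) (fun s => by simp [hφ0]) (fun s => rfl) (fun t s hs => γ.2 _ (hφb _ _ hs))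
    have e2 : GenLoop.Homotopic γ1 γ2 := genLoop_homotopic_of _ _
      (fun q => H (γ (φ 1 q.2), q.1 * lam q.2))
      (hH.comp (Continuous.prodMk (hγ.comp (hφ.comp
        (by fun_prop : Continuous fun q : I × (Fin n → I) => ((1 : I), q.2)))) (by fun_prop)))
      (fun s => by simp only [zero_mul, hH0]; rfl)
      (fun s => by
        simp only [one_mul]
        show _ = H (x, lam s)
        rcases hlam1 s with h | h
        · rw [h, hH1, hH1]
        · exact congrArg (fun y => H (y, lam s)) (γ.2 _ h))
      (fun t s hs => by
        simp only [hlamb s hs, mul_zero, hH0]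
        exact γ.2 _ (hφb _ _ hs))
    have e3 : GenLoop.Homotopic γ2 GenLoop.const := genLoop_homotopic_of _ _
      (fun q => H (x, σ q.1 * lam q.2)) (hH.comp (by fun_prop))
      (fun s => by simp; rfl)
      (fun s => by simp [hH0])
      (fun t s hs => by simp [hlamb s hs, hH0])
    exact (e1.trans e2).trans e3
  refine ⟨fun a b => ?_⟩
  induction a using Quotient.inductionOn
  induction b using Quotient.inductionOn
  exact Quotient.sound ((key _).trans (key _).symm)

end HopfModel

namespace HopfModel

theorem simplexMap_apply_of_inj {n m : ℕ} (f : Fin n → Fin m) (hf : Function.Injective f)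
    (z : stdSimplex ℝ (Fin n)) (c : Fin n) : (stdSimplex.map f z).1 (f c) = z.1 c := by
  change FunOnFinite.linearMap ℝ ℝ f z.1 (f c) = _
  rw [FunOnFinite.linearMap_apply_apply]
  rw [Finset.sum_eq_single c]
  · intro b hb hbc
    simp only [Finset.mem_filter] at hb
    exact absurd (hf hb.2) hbc
  · simp

theorem simplexMap_apply_of_notMem {n m : ℕ} (f : Fin n → Fin m)
    (z : stdSimplex ℝ (Fin n)) (d : Fin m) (hd : ∀ c, f c ≠ d) : (stdSimplex.map f z).1 d = 0 := by
  change FunOnFinite.linearMap ℝ ℝ f z.1 d = _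
  rw [FunOnFinite.linearMap_apply_apply]
  apply Finset.sum_eq_zero
  intro c hc
  simp only [Finset.mem_filter] at hc
  exact absurd hc.2 (hd c)

theorem simplexMap_injective {n m : ℕ} (f : Fin n → Fin m) (hf : Function.Injective f) :
    Function.Injective (stdSimplex.map (S := ℝ) f) := by
  intro z w h
  apply Subtype.ext
  funext c
  rw [← simplexMap_apply_of_inj f hf, ← simplexMap_apply_of_inj f hf, h]

theorem exists_face_of_zero {n : ℕ} (j : Fin (n + 1)) (y : stdSimplex ℝ (Fin (n + 1)))
    (h : y.1 j = 0) : ∃ z : stdSimplex ℝ (Fin n), stdSimplex.map j.succAbove z = y := by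
  refine ⟨⟨fun c => y.1 (j.succAbove c), fun c => y.2.1 _, ?_⟩, ?_⟩
  · have := y.2.2
    rw [Fin.sum_univ_succAbove _ j, h, zero_add] at this
    exact this
  · apply Subtype.ext
    funext d
    rcases Fin.eq_self_or_eq_succAbove j d with rfl | ⟨c, rfl⟩
    · refine Eq.trans ?_ h.symm
      exact simplexMap_apply_of_notMem _ _ _ (fun c => Fin.succAbove_ne _ c)
    · exact simplexMap_apply_of_inj _ Fin.succAbove_right_injective _ _

/-- The topological horn. -/
def topHorn (m : ℕ) (i : Fin (m + 2)) : Set (stdSimplex ℝ (Fin (m + 2))) :=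
  {y | ∃ j, j ≠ i ∧ y.1 j = 0}

theorem glue_wd {m : ℕ} {Y : Type} (i : Fin (m + 3))
    (a : ∀ j : Fin (m + 3), j ≠ i → stdSimplex ℝ (Fin (m + 2)) → Y)
    (hc : ∀ (j k : Fin (m + 3)) (hj : j ≠ i) (hk : k ≠ i) (hjk : j < k) (u),
      a j hj (stdSimplex.map (k.pred (Fin.ne_zero_of_lt hjk)).succAbove u) =
      a k hk (stdSimplex.map (j.castPred (Fin.ne_last_of_lt hjk)).succAbove u))
    (j k : Fin (m + 3)) (hj : j ≠ i) (hk : k ≠ i) (hjk : j < k) (z w)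
    (hzw : stdSimplex.map j.succAbove z = stdSimplex.map k.succAbove w) :
    a j hj z = a k hk w := by
  have hz : z.1 (k.pred (Fin.ne_zero_of_lt hjk)) = 0 := by
    rw [← simplexMap_apply_of_inj j.succAbove Fin.succAbove_right_injective, hzw]
    apply simplexMap_apply_of_notMem
    intro c
    have : j.succAbove (k.pred (Fin.ne_zero_of_lt hjk)) = k := by
      rw [Fin.succAbove_of_le_castSucc, Fin.succ_pred]
      simp only [Fin.lt_def, Fin.le_def, Fin.val_castSucc, Fin.val_pred] at *
      omega
    rw [this]
    exact Fin.succAbove_ne _ _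
  obtain ⟨u, rfl⟩ := exists_face_of_zero _ z hz
  rw [hc j k hj hk hjk]
  congr 1
  apply simplexMap_injective k.succAbove Fin.succAbove_right_injective
  rw [← hzw, stdSimplex.map_comp_apply, stdSimplex.map_comp_apply]
  congr 1
  funext c
  obtain ⟨j, rfl⟩ := j.eq_castSucc_of_ne_last (Fin.ne_last_of_lt hjk)
  obtain ⟨k, rfl⟩ := k.eq_succ_of_ne_zero (Fin.ne_zero_of_lt hjk)
  have := SimplexCategory.δ_comp_δ (i := j) (j := k) (Fin.castSucc_lt_succ_iff.1 hjk)
  have := congrArg (fun f => f.toOrderHom c) this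
  exact this

theorem glue_gen {S T Y : Type} [TopologicalSpace S] [TopologicalSpace T] [TopologicalSpace Y]
    [CompactSpace S] [T2Space T] (q : S → T) (hqc : Continuous q) (hq : Function.Surjective q)
    (a : S → Y) (hac : Continuous a)
    (h : ∀ s t, q s = q t → a s = a t) : ∃ A : C(T, Y), ∀ s, A (q s) = a s := by
  have hQ : Topology.IsQuotientMap q :=
    Topology.IsQuotientMap.of_surjective_continuous hq hqc
  choose r hr using hq
  have e : ∀ s, a (r (q s)) = a s := fun s => h _ _ (hr _)
  refine ⟨⟨fun t => a (r t), ?_⟩, e⟩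
  rw [hQ.continuous_iff]
  have : (fun t => a (r t)) ∘ q = a := funext e
  rw [this]
  exact hac

theorem exists_glue {m : ℕ} {Y : Type} [TopologicalSpace Y] (i : Fin (m + 2))
    (a : ∀ j : Fin (m + 2), j ≠ i → C(stdSimplex ℝ (Fin (m + 1)), Y))
    (hwd : ∀ (j k : Fin (m + 2)) (hj : j ≠ i) (hk : k ≠ i) (_ : j < k) (z w)
      (_ : stdSimplex.map j.succAbove z = stdSimplex.map k.succAbove w),
      a j hj z = a k hk w) :
    ∃ A : C(topHorn m i, Y), ∀ (y : topHorn m i) j hj z, y.1 = stdSimplex.map j.succAbove z →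
      A y = a j hj z := by
  have hwd' : ∀ (j k : Fin (m + 2)) (hj : j ≠ i) (hk : k ≠ i) (z w)
      (_ : stdSimplex.map j.succAbove z = stdSimplex.map k.succAbove w),
      a j hj z = a k hk w := by
    intro j k hj hk z w h
    rcases lt_trichotomy j k with hjk | rfl | hjk
    · exact hwd j k hj hk hjk z w h
    · rw [simplexMap_injective _ Fin.succAbove_right_injective h]
    · exact (hwd k j hk hj hjk w z h.symm).symm
  have h1 : Continuous (fun s : (Σ _ : {j : Fin (m + 2) // j ≠ i}, stdSimplex ℝ (Fin (m + 1))) =>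
        stdSimplex.map (S := ℝ) s.1.1.succAbove s.2) := by
    rw [continuous_sigma_iff]
    intro j
    have := stdSimplex.continuous_map (S := ℝ) j.1.succAbove
    exact this
  have h2 : ∀ s : (Σ _ : {j : Fin (m + 2) // j ≠ i}, stdSimplex ℝ (Fin (m + 1))),
      stdSimplex.map (S := ℝ) s.1.1.succAbove s.2 ∈ topHorn m i := fun s =>
    ⟨s.1.1, s.1.2, simplexMap_apply_of_notMem _ _ _ (fun c => Fin.succAbove_ne _ c)⟩
  have hqs : Function.Surjective (fun s => (⟨_, h2 s⟩ : topHorn m i)) := by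
    rintro ⟨y, j, hj, hy⟩
    obtain ⟨z, hz⟩ := exists_face_of_zero j y hy
    exact ⟨⟨⟨j, hj⟩, z⟩, Subtype.ext hz⟩
  have h3 : Continuous (fun s : (Σ _ : {j : Fin (m + 2) // j ≠ i}, stdSimplex ℝ (Fin (m + 1))) =>
      a s.1.1 s.1.2 s.2) := by
    rw [continuous_sigma_iff]
    intro j
    exact (a j.1 j.2).continuous
  obtain ⟨A, hA⟩ := glue_gen (fun s => (⟨_, h2 s⟩ : topHorn m i)) (h1.subtype_mk h2) hqs _ h3
    (fun s t hst => hwd' _ _ _ _ _ _ (congrArg Subtype.val hst))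
  refine ⟨A, ?_⟩
  intro y j hj z hy
  rw [← hA ⟨⟨j, hj⟩, z⟩]
  exact congrArg A (Subtype.ext hy)

end HopfModel

namespace HopfModel

theorem exists_shift (m : ℕ) (i : Fin (m + 2)) :
    ∃ (d : stdSimplex ℝ (Fin (m + 2)) → ℝ)
      (sh : stdSimplex ℝ (Fin (m + 2)) × ℝ → stdSimplex ℝ (Fin (m + 2))),
      Continuous d ∧ Continuous sh ∧ (∀ b, 0 ≤ d b) ∧ (∀ b, sh (b, 0) = b) ∧
      (∀ b, sh (b, d b) ∈ topHorn m i) ∧ (∀ b ∈ topHorn m i, d b = 0) := by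
  have hne : (Finset.univ.erase i).Nonempty := by
    obtain ⟨j, hj⟩ := exists_ne i
    exact ⟨j, by simpa using hj⟩
  let d : stdSimplex ℝ (Fin (m + 2)) → ℝ := fun b => (Finset.univ.erase i).inf' hne (fun j => b.1 j)
  have hd : Continuous d := by
    apply Continuous.finset_inf'_apply
    intro j _
    exact (continuous_apply j).comp continuous_subtype_val
  have hd0 : ∀ b, 0 ≤ d b := fun b => Finset.le_inf' _ _ fun j _ => b.2.1 j
  have hdle : ∀ b, ∀ j ≠ i, d b ≤ b.1 j := fun b j hj =>
    Finset.inf'_le _ (by simpa using hj)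
  let c : stdSimplex ℝ (Fin (m + 2)) × ℝ → ℝ := fun q => max 0 (min q.2 (d q.1))
  have hc : Continuous c := by fun_prop
  have hc0 : ∀ q, 0 ≤ c q := fun q => le_max_left _ _
  have hcd : ∀ q, c q ≤ d q.1 := fun q => max_le (hd0 _) (min_le_right _ _)
  have hmem : ∀ q : stdSimplex ℝ (Fin (m + 2)) × ℝ,
      (fun j => if j = i then q.1.1 i + (m + 1) * c q else q.1.1 j - c q) ∈
        stdSimplex ℝ (Fin (m + 2)) := by
    intro q
    refine ⟨fun j => ?_, ?_⟩
    · dsimp only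
      split_ifs with h
      · have := q.1.2.1 i
        have := hc0 q
        positivity
      · have := hdle q.1 j h
        have := hcd q
        linarith
    · rw [Fin.sum_univ_succAbove _ i]
      have := q.1.2.2
      rw [Fin.sum_univ_succAbove _ i] at this
      simp only [if_true, Fin.succAbove_ne, if_false, Finset.sum_sub_distrib, Finset.sum_const,
        Finset.card_univ, Fintype.card_fin, nsmul_eq_mul]
      push_cast
      linarith
  have hcont : Continuous (fun q : stdSimplex ℝ (Fin (m + 2)) × ℝ =>
      (fun j => if j = i then q.1.1 i + (m + 1) * c q else q.1.1 j - c q)) := by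
    refine continuous_pi fun j => ?_
    by_cases h : j = i
    · simp only [h, if_true]
      exact ((continuous_apply i).comp (continuous_subtype_val.comp continuous_fst)).add
        (continuous_const.mul hc)
    · simp only [h, if_false]
      exact ((continuous_apply j).comp (continuous_subtype_val.comp continuous_fst)).sub hc
  refine ⟨d, fun q => ⟨_, hmem q⟩, hd, hcont.subtype_mk hmem, hd0, ?_, ?_, ?_⟩
  · intro b
    apply Subtype.ext
    funext j
    have : c (b, 0) = 0 := by simp [c, hd0]
    simp only [this]
    split_ifs with h
    · simp [h]
    · simp
  · intro b
    obtain ⟨j, hj, hj'⟩ := Finset.exists_mem_eq_inf' hne (fun j => b.1 j)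
    have hji : j ≠ i := by simpa using hj
    refine ⟨j, hji, ?_⟩
    have : c (b, d b) = d b := by simp [c, hd0]
    simp only [this, hji, if_false]
    show b.1 j - (Finset.univ.erase i).inf' hne (fun j => b.1 j) = 0
    rw [hj', sub_self]
  · rintro b ⟨j, hj, hb⟩
    exact le_antisymm (by rw [← hb]; exact hdle b j hj) (hd0 b)

/-- The space of paths starting at `x0`. -/
abbrev Pth (X : Type) [TopologicalSpace X] (x0 : X) : Type := {γ : C(unitInterval, X) // γ 0 = x0}

open unitInterval in
theorem exists_path_lift {X : Type} [TopologicalSpace X] (x0 : X) (m : ℕ) (i : Fin (m + 2))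
    (A : C(topHorn m i, Pth X x0)) (v : C(stdSimplex ℝ (Fin (m + 2)), X))
    (hA : ∀ y, (A y).1 1 = v y.1) :
    ∃ l : C(stdSimplex ℝ (Fin (m + 2)), Pth X x0), (∀ y : topHorn m i, l y.1 = A y) ∧
      ∀ b, (l b).1 1 = v b := by
  obtain ⟨d, sh, hd, hsh, hd0, hsh0, hshd, hdh⟩ := exists_shift m i
  let F : stdSimplex ℝ (Fin (m + 2)) × I → X := fun q =>
    if (q.2 : ℝ) * (1 + d q.1) ≤ 1 then
      (A ⟨sh (q.1, d q.1), hshd q.1⟩).1 (Set.projIcc 0 1 zero_le_one ((q.2 : ℝ) * (1 + d q.1)))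
    else v (sh (q.1, d q.1 - ((q.2 : ℝ) * (1 + d q.1) - 1)))
  have hF : Continuous F := by
    refine Continuous.if_le ?_ ?_ (by fun_prop) continuous_const ?_
    · have h1 : Continuous (fun q : stdSimplex ℝ (Fin (m + 2)) × I =>
          (A ⟨sh (q.1, d q.1), hshd q.1⟩).1) :=
        continuous_subtype_val.comp (A.continuous.comp (Continuous.subtype_mk (by fun_prop) _))
      have h2 : Continuous (fun q : stdSimplex ℝ (Fin (m + 2)) × I =>
          (Set.projIcc (0 : ℝ) 1 zero_le_one ((q.2 : ℝ) * (1 + d q.1)) : I)) :=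
        continuous_projIcc.comp (by fun_prop)
      exact h1.eval h2
    · exact v.continuous.comp (by fun_prop)
    · intro q hq
      rw [hq, Set.projIcc_of_right_le _ le_rfl]
      have := hA ⟨sh (q.1, d q.1), hshd q.1⟩
      rw [sub_self, sub_zero]
      exact this
  let G : C(stdSimplex ℝ (Fin (m + 2)), C(I, X)) := ContinuousMap.curry ⟨F, hF⟩
  have hG0 : ∀ b, G b 0 = x0 := by
    intro b
    show F (b, 0) = x0
    simp only [F]
    rw [if_pos (by simp)]
    have := (A ⟨sh (b, d b), hshd b⟩).2
    simpa using this
  refine ⟨⟨fun b => ⟨G b, hG0 b⟩, G.continuous.subtype_mk _⟩, ?_, ?_⟩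
  · intro y
    apply Subtype.ext
    ext s
    show F (y.1, s) = _
    simp only [F]
    have h0 := hdh y.1 y.2
    have h1 : (⟨sh (y.1, d y.1), hshd y.1⟩ : topHorn m i) = y :=
      Subtype.ext (by show sh (y.1, d y.1) = y.1; rw [h0, hsh0])
    rw [if_pos (by simpa [h0] using s.2.2), h1, h0]
    simp
  · intro b
    show F (b, 1) = _
    simp only [F]
    split_ifs with h
    · have h0 : d b = 0 := le_antisymm (by simpa using h) (hd0 b)
      have := hA ⟨sh (b, d b), hshd b⟩
      simp only [h0, hsh0] at this
      simp only [h0, hsh0]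
      simpa using this
    · simp [hsh0]

end HopfModel

namespace HopfModel

/-- Evaluation of a path at its endpoint. -/
def evHom (X : TopCat.{0}) (x0 : X) : TopCat.of (Pth X x0) ⟶ X :=
  TopCat.ofHom ⟨fun γ => γ.1 1, by fun_prop⟩

theorem δ_yoneda {Y : SSet.{0}} {m : ℕ} (j : Fin (m + 2)) (g : Δ[m + 1] ⟶ Y) :
    SSet.yonedaEquiv (SSet.stdSimplex.δ j ≫ g) = Y.δ j (SSet.yonedaEquiv g) := by
  exact (SSet.yonedaEquiv_naturality _ _).symm

theorem sing_ev_lifting (X : TopCat.{0}) (x0 : X) (m : ℕ) (i : Fin (m + 2)) :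
    HasLiftingProperty (SSet.horn (m + 1) i).ι (TopCat.toSSet.map (evHom X x0)) := by
  constructor
  intro f g sq
  let E := TopCat.toSSetObjEquiv (TopCat.of (Pth X x0))
  let E' := TopCat.toSSetObjEquiv X
  let a : ∀ j : Fin (m + 2), j ≠ i → C(stdSimplex ℝ (Fin (m + 1)), Pth X x0) := fun j hj =>
    E (.op ⦋m⦌) (SSet.yonedaEquiv (SSet.horn.ι i j hj ≫ f))
  let v : C(stdSimplex ℝ (Fin (m + 2)), X) := E' (.op ⦋m + 1⦌) (SSet.yonedaEquiv g)
  have hav : ∀ j hj z, (a j hj z).1 1 = v (stdSimplex.map j.succAbove z) := by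
    intro j hj z
    have h := congrArg (fun k => SSet.yonedaEquiv (SSet.horn.ι i j hj ≫ k)) sq.w
    simp only [SSet.horn.ι_ι_assoc] at h
    rw [δ_yoneda] at h
    have h2 := congrArg (fun k => E' (.op ⦋m⦌) k z) h
    exact h2
  obtain ⟨A, hA⟩ := exists_glue i a (by
    have hc := SSet.horn.IsCompatible.of_hom f
    rcases m with _ | m
    · intro j k hj hk hjk
      exfalso
      omega
    · apply glue_wd
      intro j k hj hk hjk u
      have h := congrArg SSet.yonedaEquiv (hc.δ_pred_comp j k hj hk hjk)
      rw [δ_yoneda, δ_yoneda] at h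
      exact congrArg (fun k => E (.op ⦋m⦌) k u) h)
  obtain ⟨l, hl1, hl2⟩ := exists_path_lift x0 m i A v (by
    rintro ⟨y, j, hj, hy⟩
    obtain ⟨z, rfl⟩ := exists_face_of_zero j y hy
    rw [hA _ j hj z rfl, hav])
  refine ⟨⟨⟨SSet.yonedaEquiv.symm ((E (.op ⦋m + 1⦌)).symm l), ?_, ?_⟩⟩⟩
  · apply SSet.horn.hom_ext'
    intro j hj
    rw [SSet.horn.ι_ι_assoc]
    apply SSet.yonedaEquiv.injective
    rw [δ_yoneda, Equiv.apply_symm_apply]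
    apply (E (.op ⦋m⦌)).injective
    ext z : 1
    have h1 := hl1 ⟨stdSimplex.map j.succAbove z, j, hj,
      simplexMap_apply_of_notMem _ _ _ (fun c => Fin.succAbove_ne _ c)⟩
    rw [hA _ j hj z rfl] at h1
    exact h1
  · rw [SSet.yonedaEquiv_symm_comp, Equiv.symm_apply_eq]
    apply (E' (.op ⦋m + 1⦌)).injective
    ext z : 1
    exact hl2 z

open unitInterval in
theorem contraction_of_lift (P : SSet.{0}) (e0 : P _⦋0⦌)
    (h : ∀ (X S : SSet.{0}) (p : X ⟶ S), IsKanFibration p → ∀ (v : P ⟶ S) (x : X _⦋0⦌),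
      p.app _ x = v.app _ e0 → ∃ l : P ⟶ X, l ≫ p = v) :
    ∃ (x0 : SSet.toTop.obj P) (H : SSet.toTop.obj P × I → SSet.toTop.obj P), Continuous H ∧
      (∀ y, H (y, 0) = y) ∧ ∀ y, H (y, 1) = x0 := by
  let X : TopCat.{0} := SSet.toTop.obj P
  let η : P ⟶ TopCat.toSSet.obj X := sSetTopAdj.unit.app P
  let x0 : X := TopCat.toSSetObj₀Equiv (η.app _ e0)
  let cst : TopCat.of (Pth X x0) := (⟨ContinuousMap.const _ x0, rfl⟩ : Pth X x0)
  obtain ⟨l, hl⟩ := h _ _ (TopCat.toSSet.map (evHom X x0)) (sing_ev_lifting X x0) η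
    (TopCat.toSSetObj₀Equiv.symm cst) (by
      apply TopCat.toSSetObj₀Equiv.injective
      rfl)
  let c : X ⟶ TopCat.of (Pth X x0) := (sSetTopAdj.homEquiv _ _).symm l
  have hc : c ≫ evHom X x0 = 𝟙 X := by
    apply (sSetTopAdj.homEquiv _ _).injective
    rw [Adjunction.homEquiv_naturality_right, Equiv.apply_symm_apply, hl]
    rw [Adjunction.homEquiv_unit, TopCat.toSSet.map_id]
    exact (Category.comp_id _).symm
  have hc' : ∀ y, (c y).1 1 = y := fun y => ConcreteCategory.congr_hom hc y
  have hc1 : Continuous (fun y => (c y).1) := continuous_subtype_val.comp c.hom.continuous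
  refine ⟨x0, fun q => (c q.1).1 (σ q.2), ?_, ?_, ?_⟩
  · exact (hc1.comp continuous_fst).eval (continuous_symm.comp continuous_snd)
  · intro y
    simpa using hc' y
  · intro y
    have := (c y).2
    simpa using this

end HopfModel

namespace HopfModel

open MonoidalCategory

theorem exists_map_of_rel {C X : SSet.{0}} (R : ∀ n, C.obj n → X.obj n → Prop)
    (ht : ∀ n c, ∃ x, R n c x) (hf : ∀ n c x x', R n c x → R n c x' → x = x')
    (hn : ∀ n m (φ : n ⟶ m) c x, R n c x → R m (C.map φ c) (X.map φ x)) :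
    ∃ g : C ⟶ X, ∀ n c, R n c (g.app n c) := by
  choose g hg using ht
  refine ⟨{ app := fun n => ↾fun c => g n c, naturality := ?_ }, hg⟩
  intro n m φ
  ext c
  exact hf _ _ _ _ (hg _ _) (hn _ _ _ _ _ (hg _ _))

theorem kan_lift {X S : SSet.{0}} (p : X ⟶ S) (hp : IsKanFibration p) {A B : SSet.{0}} (i : A ⟶ B)
    (hi : SSet.anodyneExtensions i) : HasLiftingProperty i p := by
  refine hi p ?_
  rw [← HomotopicalAlgebra.fibration_iff, SSet.modelCategoryQuillen.fibration_iff]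
  intro _ _ f hf
  simp only [SSet.modelCategoryQuillen.J, MorphismProperty.iSup_iff] at hf
  obtain ⟨m, ⟨k⟩⟩ := hf
  exact hp m k

/-- The constant simplex of `Δ[1]`. -/
abbrev ct (i : Fin 2) (n : SimplexCategoryᵒᵖ) : (Δ[1] : SSet.{0}).obj n :=
  SSet.stdSimplex.const 1 i n

theorem mem_horn_one (i : Fin 2) (n : SimplexCategoryᵒᵖ) (t : (Δ[1] : SSet.{0}).obj n) :
    t ∈ (SSet.horn 1 i).obj n ↔ t = ct i n := by
  rw [SSet.mem_horn_iff]
  constructor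
  · intro h
    apply SSet.stdSimplex.objEquiv.injective
    ext k : 3
    by_contra hk
    apply h
    rw [Set.eq_univ_iff_forall]
    intro j
    by_cases hj : j = i
    · right; exact hj
    · left
      refine ⟨k, ?_⟩
      have : ∀ a b c : Fin 2, a ≠ b → c ≠ b → c = a := by decide
      exact this _ i _ hj hk
  · rintro rfl h
    rw [Set.eq_univ_iff_forall] at h
    have := h (i + 1)
    have hne : i + 1 ≠ i := by clear h this; revert i; decide
    rcases this with ⟨k, hk⟩ | hk
    · exact hne hk.symm
    · exact hne hk

theorem cyl_lift (i : Fin 2) {Z X S : SSet.{0}} (Z' : Z.Subcomplex) (p : X ⟶ S)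
    (hp : IsKanFibration p) (V : Z ⊗ Δ[1] ⟶ S)
    (R : ∀ n, Z.obj n → (Δ[1] : SSet.{0}).obj n → X.obj n → Prop)
    (ht : ∀ n z t, (z ∈ Z'.obj n ∨ t = ct i n) → ∃ x, R n z t x)
    (hf : ∀ n z t x x', R n z t x → R n z t x' → x = x')
    (hn : ∀ n m (φ : n ⟶ m) z t x, R n z t x → R m (Z.map φ z) ((Δ[1] : SSet.{0}).map φ t) (X.map φ x))
    (hV : ∀ n z t x, R n z t x → p.app n x = V.app n (z, t)) :
    ∃ L : Z ⊗ Δ[1] ⟶ X, L ≫ p = V ∧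
      ∀ n z t, (z ∈ Z'.obj n ∨ t = ct i n) → R n z t (L.app n (z, t)) := by
  let U := Z'.unionProd (SSet.horn 1 i)
  have hU : ∀ n z t, ((z, t) : (Z ⊗ Δ[1]).obj n) ∈ U.obj n ↔ (z ∈ Z'.obj n ∨ t = ct i n) := by
    intro n z t
    rw [← mem_horn_one, or_comm]
    exact SSet.Subcomplex.mem_unionProd_iff _ _ (z, t)
  obtain ⟨g, hg⟩ := exists_map_of_rel (C := (U : SSet.{0})) (X := X)
    (fun n c x => R n c.1.1 c.1.2 x) (fun n c => ht _ _ _ ((hU _ _ _).1 c.2))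
    (fun n c x x' => hf _ _ _ _ _) (fun n m φ c x h => hn _ _ _ _ _ _ h)
  have hU' : SSet.anodyneExtensions U.ι :=
    SSet.anodyneExtensions_unionProd_ι _ _ (SSet.anodyneExtensions.horn_ι (n := 1) i)
  have := kan_lift p hp U.ι hU'
  have sq : CommSq g U.ι p V := ⟨by
    ext n c
    exact hV _ _ _ _ (hg n c)⟩
  refine ⟨sq.lift, sq.fac_right, ?_⟩
  intro n z t hzt
  have h1 := hg n ⟨(z, t), (hU _ _ _).2 hzt⟩
  have h2 : (U.ι ≫ sq.lift).app n ⟨(z, t), (hU _ _ _).2 hzt⟩ = g.app n ⟨(z, t), (hU _ _ _).2 hzt⟩ := by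
    rw [sq.fac_left]
  rw [← h2] at h1
  exact h1

end HopfModel

namespace HopfModel

open MonoidalCategory

theorem nat_app {X Y : SSet.{0}} (f : X ⟶ Y) {n m : SimplexCategoryᵒᵖ} (φ : n ⟶ m) (x : X.obj n) :
    f.app m (X.map φ x) = Y.map φ (f.app n x) :=
  ConcreteCategory.congr_hom (f.naturality φ) x

theorem ct_map (i : Fin 2) {n m : SimplexCategoryᵒᵖ} (φ : n ⟶ m) :
    (Δ[1] : SSet.{0}).map φ (ct i n) = ct i m := rfl

theorem nat_app_prod {Z X : SSet.{0}} (h : Z ⊗ Δ[1] ⟶ X) {n m : SimplexCategoryᵒᵖ} (φ : n ⟶ m)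
    (z : Z.obj n) (t : (Δ[1] : SSet.{0}).obj n) :
    X.map φ (h.app n (z, t)) = h.app m (Z.map φ z, (Δ[1] : SSet.{0}).map φ t) :=
  (nat_app h φ (z, t)).symm

theorem comp_app_prod {Z X S : SSet.{0}} (L : Z ⊗ Δ[1] ⟶ X) (p : X ⟶ S) (V : Z ⊗ Δ[1] ⟶ S)
    (h : L ≫ p = V) (n : SimplexCategoryᵒᵖ)
    (z : Z.obj n) (t : (Δ[1] : SSet.{0}).obj n) :
    p.app n (L.app n (z, t)) = V.app n (z, t) := by
  subst h; rfl

theorem step_lift {B Y X S : SSet.{0}} (A' A : B.Subcomplex) (hA : A' ≤ A) (pr : B ⟶ Y)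
    (h : B ⊗ Δ[1] ⟶ B) (h1 : ∀ n b, h.app n (b, ct 1 n) = b)
    (h0 : ∀ n b b', pr.app n b = pr.app n b' → h.app n (b, ct 0 n) = h.app n (b', ct 0 n))
    (hA' : ∀ n b t, b ∈ A'.obj n → h.app n (b, t) ∈ A'.obj n)
    (hs : ∀ n b, ∃ a ∈ A.obj n, pr.app n a = pr.app n b)
    (hi : ∀ n, ∀ a ∈ A.obj n, ∀ a' ∈ A.obj n, pr.app n a = pr.app n a' →
      a = a' ∨ (a ∈ A'.obj n ∧ a' ∈ A'.obj n))
    (p : X ⟶ S) (hp : IsKanFibration p) (u : A.toSSet ⟶ X) (v : B ⟶ S)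
    (huv : ∀ n a, p.app n (u.app n a) = v.app n a.1) :
    ∃ l : B ⟶ X, (∀ n (a : A.toSSet.obj n), l.app n a.1 = u.app n a) ∧ l ≫ p = v := by
  -- first lift
  obtain ⟨L₁, hL₁p, hL₁⟩ := cyl_lift 1 (Z := A.toSSet) (A'.preimage A.ι) p hp
    ((A.ι ▷ Δ[1]) ≫ h ≫ v)
    (fun n a t x => ∃ ha : h.app n (a.1, t) ∈ A.obj n, x = u.app n ⟨_, ha⟩)
    (by
      intro n z t hz
      have ha : h.app n (z.1, t) ∈ A.obj n := by
        rcases hz with hz | rfl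
        · exact hA _ (hA' _ _ _ hz)
        · rw [h1]; exact z.2
      exact ⟨_, ha, rfl⟩)
    (by
      rintro n z t x x' ⟨_, rfl⟩ ⟨_, rfl⟩
      rfl)
    (by
      rintro n m φ z t x ⟨ha, rfl⟩
      have e : B.map φ (h.app n (z.1, t)) = h.app m (B.map φ z.1, (Δ[1] : SSet.{0}).map φ t) :=
        nat_app_prod h φ z.1 t
      have ha' : B.map φ (h.app n (z.1, t)) ∈ A.obj m := A.map φ ha
      refine ⟨by rw [e] at ha'; exact ha', ?_⟩
      refine (nat_app u φ ⟨_, ha⟩).symm.trans ?_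
      exact congrArg _ (Subtype.ext e))
    (by
      rintro n z t x ⟨ha, rfl⟩
      exact huv n ⟨_, ha⟩)
  have hL₁A' : ∀ n (a : A.toSSet.obj n), a.1 ∈ A'.obj n → ∃ ha,
      L₁.app n (a, ct 0 n) = u.app n ⟨h.app n (a.1, ct 0 n), ha⟩ := fun n a ha =>
    hL₁ n a (ct 0 n) (Or.inl ha)
  have hL₁1 : ∀ n (a : A.toSSet.obj n), L₁.app n (a, ct 1 n) = u.app n a := by
    intro n a
    obtain ⟨ha, e⟩ := hL₁ n a (ct 1 n) (Or.inr rfl)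
    rw [e]
    exact congrArg _ (Subtype.ext (h1 _ _))
  have hL₁p' : ∀ n (a : A.toSSet.obj n) t, p.app n (L₁.app n (a, t)) = v.app n (h.app n (a.1, t)) := by
    intro n a t
    exact comp_app_prod L₁ p _ hL₁p n a t
  have hwd : ∀ n (a a' : A.toSSet.obj n), pr.app n a.1 = pr.app n a'.1 →
      L₁.app n (a, ct 0 n) = L₁.app n (a', ct 0 n) := by
    intro n a a' e
    rcases hi n _ a.2 _ a'.2 e with e' | ⟨ha, ha'⟩
    · rw [Subtype.ext e' (a1 := a)]
    · obtain ⟨k, hk⟩ := hL₁A' n a ha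
      obtain ⟨k', hk'⟩ := hL₁A' n a' ha'
      rw [hk, hk']
      exact congrArg _ (Subtype.ext (h0 _ _ _ e))
  -- descend the end
  obtain ⟨w, hw⟩ := exists_map_of_rel (C := B) (X := X)
    (fun n b x => ∃ a : A.toSSet.obj n, pr.app n a.1 = pr.app n b ∧ x = L₁.app n (a, ct 0 n))
    (by
      intro n b
      obtain ⟨a, ha, e⟩ := hs n b
      exact ⟨_, ⟨a, ha⟩, e, rfl⟩)
    (by
      rintro n b x x' ⟨a, ha, rfl⟩ ⟨a', ha', rfl⟩
      exact hwd _ _ _ (ha.trans ha'.symm))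
    (by
      rintro n m φ b x ⟨a, ha, rfl⟩
      refine ⟨A.toSSet.map φ a, ?_, ?_⟩
      · have e1 := nat_app pr φ a.1
        have e2 := nat_app pr φ b
        rw [e2, ← ha, ← e1]
        rfl
      · rw [nat_app_prod]
        rfl)
  have hwA : ∀ n (a : A.toSSet.obj n), w.app n a.1 = L₁.app n (a, ct 0 n) := by
    intro n a
    obtain ⟨a', ha', e⟩ := hw n a.1
    rw [e]
    exact hwd _ _ _ ha'
  -- second lift
  obtain ⟨L₂, hL₂p, hL₂⟩ := cyl_lift 0 A p hp (h ≫ v)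
    (fun n b t x => (t = ct 0 n ∧ x = w.app n b) ∨ ∃ hb : b ∈ A.obj n, x = L₁.app n (⟨b, hb⟩, t))
    (by
      rintro n b t (hb | ht)
      · exact ⟨_, Or.inr ⟨hb, rfl⟩⟩
      · exact ⟨_, Or.inl ⟨ht, rfl⟩⟩)
    (by
      rintro n b t x x' (⟨ht, rfl⟩ | ⟨hb, rfl⟩) (⟨ht', rfl⟩ | ⟨hb', rfl⟩)
      · rfl
      · rw [ht]; exact hwA n ⟨b, hb'⟩
      · rw [ht']; exact (hwA n ⟨b, hb⟩).symm
      · rfl)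
    (by
      rintro n m φ b t x (⟨rfl, rfl⟩ | ⟨hb, rfl⟩)
      · exact Or.inl ⟨ct_map _ _, (nat_app w φ b).symm⟩
      · right
        exact ⟨A.map φ hb, nat_app_prod L₁ φ (⟨b, hb⟩ : A.toSSet.obj n) t⟩)
    (by
      rintro n b t x (⟨rfl, rfl⟩ | ⟨hb, rfl⟩)
      · obtain ⟨a, ha, e⟩ := hw n b
        rw [e, hL₁p', h0 n a.1 b ha]
        rfl
      · exact hL₁p' n ⟨b, hb⟩ t)
  have hL₂p' : ∀ n b t, p.app n (L₂.app n (b, t)) = v.app n (h.app n (b, t)) := by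
    intro n b t
    exact comp_app_prod L₂ p _ hL₂p n b t
  refine ⟨SSet.ι₁ ≫ L₂, ?_, ?_⟩
  · intro n a
    show L₂.app n (a.1, ct 1 n) = _
    rcases hL₂ n a.1 (ct 1 n) (Or.inl a.2) with ⟨e, -⟩ | ⟨ha, e⟩
    · exfalso
      have this : (1 : Fin 2) = 0 := congrArg (fun (t : (Δ[1] : SSet.{0}).obj n) => (SSet.stdSimplex.objEquiv t).toOrderHom 0) e
      exact absurd this (by decide)
    · rw [e]
      exact hL₁1 n a
  · ext n b
    show p.app n (L₂.app n (b, ct 1 n)) = v.app n b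
    rw [hL₂p', h1]

end HopfModel

namespace HopfModel

open MonoidalCategory

/-- The layers of the tree. -/
noncomputable def ELay {B Y P : SSet.{0}} (f : B ⟶ Y) (π : B ⟶ P) (e0 : P _⦋0⦌) (k : ℕ) :
    P.Subcomplex :=
  Nat.rec (SSet.Subcomplex.ofSimplex e0)
    (fun _ E => ((((E.preimage π).image f).preimage f).image π)) k

/-- The layers of the tree. -/
noncomputable def GLay {B Y P : SSet.{0}} (f : B ⟶ Y) (π : B ⟶ P) (e0 : P _⦋0⦌) (k : ℕ) :
    Y.Subcomplex :=
  Nat.rec ⊥ (fun k _ => ((ELay f π e0 k).preimage π).image f) k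

section
variable {B Y P : SSet.{0}} (f : B ⟶ Y) (π : B ⟶ P) (e0 : P _⦋0⦌)

theorem mem_ELay_succ (k : ℕ) (n) (e : P.obj n) :
    e ∈ (ELay f π e0 (k+1)).obj n ↔ ∃ z : B.obj n, f.app n z ∈ (GLay f π e0 (k+1)).obj n ∧ π.app n z = e :=
  Iff.rfl

theorem mem_GL_succ (k : ℕ) (n) (y : Y.obj n) :
    y ∈ (GLay f π e0 (k+1)).obj n ↔ ∃ z : B.obj n, π.app n z ∈ (ELay f π e0 k).obj n ∧ f.app n z = y :=
  Iff.rfl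

theorem EL_of_GL (k : ℕ) (n) (z : B.obj n) (h : f.app n z ∈ (GLay f π e0 k).obj n) :
    π.app n z ∈ (ELay f π e0 k).obj n := by
  cases k with
  | zero => exact h.elim
  | succ k => exact ⟨z, h, rfl⟩

theorem GL_of_EL (k : ℕ) (n) (z : B.obj n) (h : π.app n z ∈ (ELay f π e0 k).obj n) :
    f.app n z ∈ (GLay f π e0 (k+1)).obj n := ⟨z, h, rfl⟩

theorem EL_mono (hπ : ∀ n e, ∃ z, π.app n z = e) (k : ℕ) (n) (e : P.obj n)
    (h : e ∈ (ELay f π e0 k).obj n) : e ∈ (ELay f π e0 (k+1)).obj n := by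
  obtain ⟨z, rfl⟩ := hπ n e
  exact ⟨z, GL_of_EL f π e0 k n z h, rfl⟩

variable (Down : ∀ n, B.obj n → Prop)
    (d1 : ∀ n z z', Down n z → Down n z' → f.app n z = f.app n z' → z = z')
    (d2 : ∀ n z z', ¬ Down n z → ¬ Down n z' → π.app n z = π.app n z' → z = z')
    (d3 : ∀ n z, π.app n z ∈ (SSet.Subcomplex.ofSimplex e0).obj n → Down n z)

include d1 in
theorem CG_of_CE (k : ℕ) (n)
    (ih : ∀ z : B.obj n, π.app n z ∈ (ELay f π e0 k).obj n → ¬ Down n z → f.app n z ∈ (GLay f π e0 k).obj n)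
    (z : B.obj n) (hz : f.app n z ∈ (GLay f π e0 (k+1)).obj n) (hd : Down n z) :
    π.app n z ∈ (ELay f π e0 k).obj n := by
  obtain ⟨y, hy, e⟩ := hz
  by_cases hy' : Down n y
  · rw [d1 n z y hd hy' e.symm]; exact hy
  · have := ih y hy hy'
    apply EL_of_GL
    rw [← e]; exact this

include d1 d2 d3 in
theorem CE (k : ℕ) (n) : ∀ (z : B.obj n), π.app n z ∈ (ELay f π e0 k).obj n → ¬ Down n z →
    f.app n z ∈ (GLay f π e0 k).obj n := by
  induction k with
  | zero => intro z hz hd; exact absurd (d3 n z hz) hd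
  | succ k ih =>
    intro z hz hd
    obtain ⟨y, hy, e⟩ := (mem_ELay_succ f π e0 k n _).1 hz
    by_cases hy' : Down n y
    · have := CG_of_CE f π e0 Down d1 k n ih y hy hy'
      rw [e] at this
      exact GL_of_EL f π e0 k n z this
    · rw [d2 n z y hd hy' e.symm]; exact hy

include d1 d2 d3 in
theorem tree_i (k : ℕ) (n) (z z' : B.obj n) (hz : π.app n z ∈ (ELay f π e0 k).obj n)
    (hz' : π.app n z' ∈ (ELay f π e0 k).obj n) (e : f.app n z = f.app n z') :
    z = z' ∨ f.app n z ∈ (GLay f π e0 k).obj n := by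
  by_cases h : Down n z
  · by_cases h' : Down n z'
    · exact Or.inl (d1 n z z' h h' e)
    · rw [e]
      exact Or.inr (CE f π e0 Down d1 d2 d3 k n z' hz' h')
  · exact Or.inr (CE f π e0 Down d1 d2 d3 k n z hz h)

include d1 d2 d3 in
theorem tree_ii (k : ℕ) (n) (z z' : B.obj n) (hz : f.app n z ∈ (GLay f π e0 (k+1)).obj n)
    (hz' : f.app n z' ∈ (GLay f π e0 (k+1)).obj n) (e : π.app n z = π.app n z') :
    z = z' ∨ π.app n z ∈ (ELay f π e0 k).obj n := by
  have ih := CE f π e0 Down d1 d2 d3 k n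
  by_cases h : Down n z
  · exact Or.inr (CG_of_CE f π e0 Down d1 k n ih z hz h)
  · by_cases h' : Down n z'
    · rw [e]
      exact Or.inr (CG_of_CE f π e0 Down d1 k n ih z' hz' h')
    · exact Or.inl (d2 n z z' h h' e)

variable (hπ : ∀ n e, ∃ z, π.app n z = e)
    (h : B ⊗ Δ[1] ⟶ B) (h1 : ∀ n b, h.app n (b, ct 1 n) = b)
    (hf : ∀ n b t, f.app n (h.app n (b, t)) = f.app n b)
    (h0 : ∀ n b b', f.app n b = f.app n b' → h.app n (b, ct 0 n) = h.app n (b', ct 0 n))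

include d1 d2 d3 h1 hf h0 in
theorem tree_step {X S : SSet.{0}} (p : X ⟶ S) (hp : IsKanFibration p) (v : P ⟶ S) (k : ℕ)
    (u : (ELay f π e0 k).toSSet ⟶ X) (hu : ∀ n e, p.app n (u.app n e) = v.app n e.1) :
    ∃ u' : (ELay f π e0 (k+1)).toSSet ⟶ X, (∀ n e, p.app n (u'.app n e) = v.app n e.1) ∧
      ∀ n (e : P.obj n) (he : e ∈ (ELay f π e0 k).obj n) (he' : e ∈ (ELay f π e0 (k+1)).obj n),
        u'.app n ⟨e, he'⟩ = u.app n ⟨e, he⟩ := by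
  let Bk : B.Subcomplex := (GLay f π e0 (k+1)).preimage f
  let A : Bk.toSSet.Subcomplex := (ELay f π e0 k).preimage (Bk.ι ≫ π)
  let A' : Bk.toSSet.Subcomplex := (GLay f π e0 k).preimage (Bk.ι ≫ f)
  obtain ⟨hB, hhB⟩ := exists_map_of_rel (C := Bk.toSSet ⊗ Δ[1]) (X := Bk.toSSet)
    (fun n c x => x.1 = h.app n (c.1.1, c.2))
    (by
      intro n c
      refine ⟨⟨h.app n (c.1.1, c.2), ?_⟩, rfl⟩
      have := c.1.2
      change f.app n _ ∈ (GLay f π e0 (k+1)).obj n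
      rw [hf]
      exact this)
    (by
      rintro n c x x' e e'
      exact Subtype.ext (e.trans e'.symm))
    (by
      rintro n m φ c x e
      exact (congrArg (B.map φ) e).trans (nat_app_prod h φ c.1.1 c.2))
  have hhB' : ∀ n (b : Bk.toSSet.obj n) t, (hB.app n (b, t)).1 = h.app n (b.1, t) :=
    fun n b t => hhB n (b, t)
  obtain ⟨uA, huA⟩ := exists_map_of_rel (C := A.toSSet) (X := X)
    (fun n c x => x = u.app n ⟨π.app n c.1.1, c.2⟩)
    (fun n c => ⟨_, rfl⟩) (fun n c x x' e e' => e.trans e'.symm)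
    (by
      rintro n m φ c x rfl
      refine (nat_app u φ _).symm.trans (congrArg _ (Subtype.ext ?_))
      exact (nat_app π φ c.1.1).symm)
  obtain ⟨l, hl, hlp⟩ := step_lift A' A
    (by intro n b hb; exact EL_of_GL f π e0 k _ _ hb) (Bk.ι ≫ f) hB
    (by intro n b; exact Subtype.ext ((hhB' n b _).trans (h1 n b.1)))
    (by
      intro n b b' e
      exact Subtype.ext ((hhB' n b _).trans ((h0 n b.1 b'.1 e).trans (hhB' n b' _).symm)))
    (by
      intro n b t hb
      change f.app n (hB.app n (b, t)).1 ∈ (GLay f π e0 k).obj n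
      rw [hhB', hf]
      exact hb)
    (by
      intro n b
      obtain ⟨y, hy, e⟩ := (mem_GL_succ f π e0 k n _).1 b.2
      exact ⟨⟨y, GL_of_EL f π e0 k n y hy⟩, hy, e⟩)
    (by
      intro n a ha a' ha' e
      rcases tree_i f π e0 Down d1 d2 d3 k n a.1 a'.1 ha ha' e with e' | e'
      · exact Or.inl (Subtype.ext e')
      · right
        refine ⟨e', ?_⟩
        have e : f.app n a.1 = f.app n a'.1 := e
        change f.app n a'.1 ∈ (GLay f π e0 k).obj n
        rw [← e]; exact e')
    p hp uA (Bk.ι ≫ π ≫ v)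
    (by
      intro n a
      rw [huA n a]
      exact hu n _)
  have hl' : ∀ n (b : Bk.toSSet.obj n) (hb : π.app n b.1 ∈ (ELay f π e0 k).obj n),
      l.app n b = u.app n ⟨π.app n b.1, hb⟩ := fun n b hb => (hl n ⟨b, hb⟩).trans (huA n ⟨b, hb⟩)
  have hlp' : ∀ n (b : Bk.toSSet.obj n), p.app n (l.app n b) = v.app n (π.app n b.1) := by
    intro n b
    exact ConcreteCategory.congr_hom (NatTrans.congr_app hlp n) b
  obtain ⟨u', hu'⟩ := exists_map_of_rel (C := (ELay f π e0 (k+1)).toSSet) (X := X)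
    (fun n e x => ∃ b : Bk.toSSet.obj n, π.app n b.1 = e.1 ∧ x = l.app n b)
    (by
      rintro n ⟨e, he⟩
      obtain ⟨z, hz, e⟩ := (mem_ELay_succ f π e0 k n _).1 he
      exact ⟨_, ⟨z, hz⟩, e, rfl⟩)
    (by
      rintro n e x x' ⟨b, hb, rfl⟩ ⟨b', hb', rfl⟩
      rcases tree_ii f π e0 Down d1 d2 d3 k n b.1 b'.1 b.2 b'.2 (hb.trans hb'.symm) with e' | e'
      · rw [Subtype.ext e' (a1 := b)]
      · have e'' : π.app n b'.1 ∈ (ELay f π e0 k).obj n := by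
          rw [hb', ← hb]; exact e'
        rw [hl' n b e', hl' n b' e'']
        exact congrArg _ (Subtype.ext (hb.trans hb'.symm)))
    (by
      rintro n m φ e x ⟨b, hb, rfl⟩
      refine ⟨Bk.toSSet.map φ b, ?_, (nat_app l φ b).symm⟩
      exact (nat_app π φ b.1).trans (congrArg _ hb))
  refine ⟨u', ?_, ?_⟩
  · intro n e
    obtain ⟨b, hb, e'⟩ := hu' n e
    rw [e', hlp', hb]
  · intro n e he he'
    obtain ⟨b, hb, e'⟩ := hu' n ⟨e, he'⟩
    have hb : π.app n b.1 = e := hb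
    subst hb
    rw [e', hl' n b he]

include d1 d2 d3 hπ h1 hf h0 in
theorem tree_lift (hex : ∀ n (e : P.obj n), ∃ k, e ∈ (ELay f π e0 k).obj n)
    (X S : SSet.{0}) (p : X ⟶ S) (hp : IsKanFibration p) (v : P ⟶ S) (x : X _⦋0⦌)
    (hx : p.app _ x = v.app _ e0) : ∃ l : P ⟶ X, l ≫ p = v := by
  let PL (k : ℕ) := {u : (ELay f π e0 k).toSSet ⟶ X // ∀ n e, p.app n (u.app n e) = v.app n e.1}
  have base : Nonempty (PL 0) := by
    obtain ⟨u, hu⟩ := exists_map_of_rel (C := (ELay f π e0 0).toSSet) (X := X)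
      (fun n e y => ∃ φ : Opposite.op (SimplexCategory.mk 0) ⟶ n, P.map φ e0 = e.1 ∧ y = X.map φ x)
      (by
        rintro n ⟨e, he⟩
        obtain ⟨φ, hφ⟩ := (SSet.Subcomplex.mem_ofSimplex_obj_iff _ _).1 he
        exact ⟨_, _, hφ, rfl⟩)
      (by
        rintro n e y y' ⟨φ, -, rfl⟩ ⟨φ', -, rfl⟩
        have : φ = φ' := Quiver.Hom.unop_inj (Subsingleton.elim _ _)
        rw [this])
      (by
        rintro n m ψ e y ⟨φ, hφ, rfl⟩
        refine ⟨φ ≫ ψ, ?_, ?_⟩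
        · rw [P.map_comp]
          exact congrArg (P.map ψ) hφ
        · rw [X.map_comp]
          rfl)
    refine ⟨u, ?_⟩
    intro n e
    obtain ⟨φ, hφ, e'⟩ := hu n e
    rw [e', nat_app, hx, ← nat_app, hφ]
  have step : ∀ k (u : PL k), ∃ u' : PL (k+1), ∀ n (e : P.obj n)
      (he : e ∈ (ELay f π e0 k).obj n) (he' : e ∈ (ELay f π e0 (k+1)).obj n),
        u'.1.app n ⟨e, he'⟩ = u.1.app n ⟨e, he⟩ := by
    intro k u
    obtain ⟨u', a, b⟩ := tree_step f π e0 Down d1 d2 d3 h h1 hf h0 p hp v k u.1 u.2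
    exact ⟨⟨u', a⟩, b⟩
  choose s hs using step
  let U : ∀ k, PL k := fun k => Nat.rec base.some (fun k u => s k u) k
  have hU : ∀ k n (e : P.obj n)
      (he : e ∈ (ELay f π e0 k).obj n) (he' : e ∈ (ELay f π e0 (k+1)).obj n),
        (U (k+1)).1.app n ⟨e, he'⟩ = (U k).1.app n ⟨e, he⟩ := fun k => hs k (U k)
  have hm : ∀ j k n (e : P.obj n), e ∈ (ELay f π e0 k).obj n → e ∈ (ELay f π e0 (k+j)).obj n := by
    intro j k n e he
    induction j with
    | zero => exact he
    | succ j ih => exact EL_mono f π e0 hπ _ n e ih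
  have hU' : ∀ j k n (e : P.obj n)
      (he : e ∈ (ELay f π e0 k).obj n) (he' : e ∈ (ELay f π e0 (k+j)).obj n),
        (U (k+j)).1.app n ⟨e, he'⟩ = (U k).1.app n ⟨e, he⟩ := by
    intro j
    induction j with
    | zero => intro k n e he he'; rfl
    | succ j ih =>
      intro k n e he he'
      exact (hU (k+j) n e (hm j k n e he) he').trans (ih k n e he _)
  have hU'' : ∀ j k, j ≤ k → ∀ n (e : P.obj n)
      (he : e ∈ (ELay f π e0 j).obj n) (he' : e ∈ (ELay f π e0 k).obj n),
        (U k).1.app n ⟨e, he'⟩ = (U j).1.app n ⟨e, he⟩ := by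
    intro j k hjk
    obtain ⟨i, rfl⟩ := Nat.exists_eq_add_of_le hjk
    exact hU' i j
  obtain ⟨l, hl⟩ := exists_map_of_rel (C := P) (X := X)
    (fun n e y => ∃ k, ∃ he : e ∈ (ELay f π e0 k).obj n, y = (U k).1.app n ⟨e, he⟩)
    (by
      intro n e
      obtain ⟨k, hk⟩ := hex n e
      exact ⟨_, k, hk, rfl⟩)
    (by
      rintro n e y y' ⟨k, hk, rfl⟩ ⟨k', hk', rfl⟩
      rcases le_total k k' with hh | hh
      · exact (hU'' _ _ hh n e _ _).symm
      · exact hU'' _ _ hh n e _ _)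
    (by
      rintro n m φ e y ⟨k, hk, rfl⟩
      exact ⟨k, (ELay f π e0 k).map φ hk, (nat_app (U k).1 φ ⟨e, hk⟩).symm⟩)
  refine ⟨l, ?_⟩
  ext n e
  obtain ⟨k, hk, e'⟩ := hl n e
  show p.app n (l.app n e) = _
  exact (congrArg (p.app n) e').trans ((U k).2 n ⟨e, hk⟩)

end

end HopfModel

namespace HopfModel

theorem head_of_mul {N : Type} [DecidableEq N] (x : N) (w : FreeGroup N)
    (h : w.toWord.head? ≠ some (x, false)) : (FreeGroup.of x * w).toWord.head? = some (x, true) := by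
  have e : (FreeGroup.of x * w).toWord = FreeGroup.reduce ((x, true) :: w.toWord) := by
    rw [FreeGroup.toWord_mul, FreeGroup.toWord_of]; rfl
  rw [e, FreeGroup.reduce.cons, FreeGroup.reduce_toWord]
  rcases hw : w.toWord with _ | ⟨⟨y, b⟩, tl⟩
  · rfl
  · rw [hw] at h
    have : ¬ (x = y ∧ b = false) := by
      rintro ⟨rfl, rfl⟩
      exact h rfl
    have h2 : ¬ (x = y ∧ true = !b) := by
      rintro ⟨rfl, hb⟩
      apply this
      cases b with
      | false => exact ⟨rfl, rfl⟩
      | true => exact absurd hb (by decide)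
    simp only [h2, if_false]
    rfl

theorem head_inv_of {N : Type} [DecidableEq N] (x : N) :
    ((FreeGroup.of x)⁻¹).toWord.head? = some (x, false) := by
  rw [FreeGroup.toWord_inv, FreeGroup.toWord_of]; rfl

section
variable {A C G : Type} [Group G] (s : C → A) (d : A → C) (hds : ∀ c, d (s c) = c)
  (τ : A → G) (hτ : ∀ c, τ (s c) = 1)
  (θ : G →* FreeGroup {a : A // a ∉ Set.range s}) (hθ : ∀ a, θ (τ a.1) = FreeGroup.of a) (b0 : C)

open Classical in
/-- The direction predicate of the tree. -/
def DownP (g : G) (x : A) : Prop :=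
  (∃ hx : x ∉ Set.range s, (θ g).toWord.head? = some (⟨x, hx⟩, false)) ∨
  (∃ y, (θ g).toWord.head? = some (y, true) ∧ x = s (d y.1)) ∨ (g = 1 ∧ x = s b0)

theorem downP1 (g : G) (x x' : A) (h : DownP s d θ b0 g x) (h' : DownP s d θ b0 g x') : x = x' := by
  rcases h with ⟨hx, h⟩ | ⟨y, h, rfl⟩ | ⟨rfl, rfl⟩ <;>
  rcases h' with ⟨hx', h'⟩ | ⟨y', h', rfl⟩ | ⟨h', rfl⟩
  · simp_all
  · simp_all
  · simp_all
  · simp_all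
  · simp_all
  · simp_all
  · simp_all
  · simp_all
  · rfl

include hds hτ hθ in
theorem downP2_aux (g g' : G) (x x' : A) (h' : ¬ DownP s d θ b0 g' x')
    (e : τ x * g = τ x' * g') (ed : d x = d x') (hx : x ∈ Set.range s) (hx' : x' ∉ Set.range s) :
    DownP s d θ b0 g x := by
  obtain ⟨c, rfl⟩ := hx
  rw [hτ, one_mul] at e
  right; left
  refine ⟨⟨x', hx'⟩, ?_, ?_⟩
  · rw [e, map_mul, hθ ⟨x', hx'⟩]
    classical
    apply head_of_mul
    intro hh
    exact h' (Or.inl ⟨hx', hh⟩)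
  · rw [← ed, hds]

include hds hτ hθ in
theorem downP2 (g g' : G) (x x' : A) (h : ¬ DownP s d θ b0 g x) (h' : ¬ DownP s d θ b0 g' x')
    (e : τ x * g = τ x' * g') (ed : d x = d x') : g = g' ∧ x = x' := by
  suffices hh : x = x' by
    subst hh
    exact ⟨mul_left_cancel e, rfl⟩
  by_cases hx : x ∈ Set.range s
  · by_cases hx' : x' ∈ Set.range s
    · obtain ⟨c, rfl⟩ := hx
      obtain ⟨c', rfl⟩ := hx'
      rw [hds, hds] at ed
      rw [ed]
    · exact absurd (downP2_aux s d hds τ hτ θ hθ b0 g g' x x' h' e ed hx hx') h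
  · by_cases hx' : x' ∈ Set.range s
    · exact absurd (downP2_aux s d hds τ hτ θ hθ b0 g' g x' x h e.symm ed.symm hx' hx) h'
    · have e' := congrArg θ e
      rw [map_mul, map_mul, hθ ⟨x, hx⟩, hθ ⟨x', hx'⟩] at e'
      classical
      have h1 := head_of_mul (⟨x, hx⟩ : {a : A // a ∉ Set.range s}) (θ g)
        (fun hh => h (Or.inl ⟨hx, by convert hh⟩))
      have h2 := head_of_mul (⟨x', hx'⟩ : {a : A // a ∉ Set.range s}) (θ g')
        (fun hh => h' (Or.inl ⟨hx', by convert hh⟩))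
      rw [e', h2] at h1
      simp at h1
      exact h1.symm

include hds hτ hθ in
theorem downP3 (g : G) (x : A) (e : τ x * g = 1) (ed : d x = b0) : DownP s d θ b0 g x := by
  by_cases hx : x ∈ Set.range s
  · obtain ⟨c, rfl⟩ := hx
    rw [hτ, one_mul] at e
    rw [hds] at ed
    exact Or.inr (Or.inr ⟨e, by rw [ed]⟩)
  · refine Or.inl ⟨hx, ?_⟩
    have : g = (τ x)⁻¹ := (inv_eq_of_mul_eq_one_right e).symm
    rw [this, map_inv, hθ ⟨x, hx⟩]
    classical
    exact head_inv_of _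
end

theorem exists_theta {A C G : Type} [Group G] (s : C → A) (τ : A → G)
    (ψ : PresentedGroup (Set.range fun c => FreeGroup.of (s c)) ≃* G)
    (hψ : ∀ a, ψ (PresentedGroup.of a) = τ a) :
    ∃ θ : G →* FreeGroup {a : A // a ∉ Set.range s}, ∀ a, θ (τ a.1) = FreeGroup.of a := by
  classical
  let F : A → FreeGroup {a : A // a ∉ Set.range s} := fun a =>
    if h : a ∈ Set.range s then 1 else FreeGroup.of ⟨a, h⟩
  have hF : ∀ r ∈ (Set.range fun c => FreeGroup.of (s c)), FreeGroup.lift F r = 1 := by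
    rintro _ ⟨c, rfl⟩
    simp [F]
  refine ⟨(PresentedGroup.toGroup hF).comp ψ.symm.toMonoidHom, ?_⟩
  rintro ⟨a, ha⟩
  rw [← hψ]
  change (PresentedGroup.toGroup hF) (ψ.symm (ψ _)) = _
  rw [ψ.symm_apply_apply, PresentedGroup.toGroup.of]
  simp only [F, ha, dite_false]

theorem gen_induction {A G : Type} [Group G] (τ : A → G) (rels : Set (FreeGroup A))
    (ψ : PresentedGroup rels ≃* G) (hψ : ∀ a, ψ (PresentedGroup.of a) = τ a) (Q : G → Prop)
    (h1 : Q 1) (hm : ∀ a g, Q g → Q (τ a * g)) (hi : ∀ a g, Q g → Q ((τ a)⁻¹ * g)) (g : G) : Q g := by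
  have hg : g ∈ Subgroup.closure (Set.range τ) := by
    obtain ⟨w, rfl⟩ := ψ.surjective g
    have hw : w ∈ Subgroup.closure (Set.range (PresentedGroup.of : A → PresentedGroup rels)) := by
      rw [PresentedGroup.closure_range_of]; trivial
    have : Set.range τ = ψ.toMonoidHom '' (Set.range (PresentedGroup.of : A → PresentedGroup rels)) := by
      rw [← Set.range_comp]
      congr 1
      ext a
      exact (hψ a).symm
    rw [this, ← MonoidHom.map_closure]
    exact ⟨w, hw, rfl⟩
  induction hg using Subgroup.closure_induction_left with
  | one => exact h1
  | mul_left x hx y _ ih =>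
    obtain ⟨a, rfl⟩ := hx
    exact hm a y ih
  | inv_mul_cancel x hx y _ ih =>
    obtain ⟨a, rfl⟩ := hx
    exact hi a y ih

end HopfModel

namespace HopfModel

open MonoidalCategory

/-- Shift on the simplex category. -/
def shMap {a b : SimplexCategory} (φ : a ⟶ b) :
    SimplexCategory.mk (a.len + 1) ⟶ SimplexCategory.mk (b.len + 1) :=
  SimplexCategory.Hom.mk
    { toFun := Fin.cases 0 (fun i => (φ.toOrderHom i).succ)
      monotone' := by
        intro i j hij
        induction i using Fin.cases with
        | zero => exact Fin.zero_le _
        | succ i =>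
          induction j using Fin.cases with
          | zero => exact absurd hij (by simp)
          | succ j => simpa using φ.toOrderHom.monotone (by simpa using hij) }

theorem shMap_zero {a b : SimplexCategory} (φ : a ⟶ b) : (shMap φ).toOrderHom 0 = 0 := rfl

theorem shMap_succ {a b : SimplexCategory} (φ : a ⟶ b) (i : Fin (a.len + 1)) :
    (shMap φ).toOrderHom i.succ = (φ.toOrderHom i).succ := rfl

theorem sh_ext {a : ℕ} {b : SimplexCategory} (φ ψ : SimplexCategory.mk (a + 1) ⟶ b)
    (h0 : φ.toOrderHom 0 = ψ.toOrderHom 0)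
    (hs : ∀ i : Fin (a+1), φ.toOrderHom i.succ = ψ.toOrderHom i.succ) : φ = ψ := by
  ext i : 3
  induction i using Fin.cases with
  | zero => exact h0
  | succ i => exact hs i

theorem shMap_id (a : SimplexCategory) : shMap (𝟙 a) = 𝟙 _ :=
  sh_ext _ _ rfl (fun _ => rfl)

theorem shMap_comp {a b c : SimplexCategory} (φ : a ⟶ b) (ψ : b ⟶ c) :
    shMap (φ ≫ ψ) = shMap φ ≫ shMap ψ :=
  sh_ext _ _ rfl (fun _ => rfl)

theorem shMap_δ {n : ℕ} (i : Fin (n + 2)) :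
    shMap (SimplexCategory.δ i) = SimplexCategory.δ i.succ := by
  refine sh_ext _ _ ?_ (fun j => ?_)
  · rfl
  · exact (Fin.succ_succAbove_succ i j).symm

theorem shMap_σ {n : ℕ} (i : Fin (n + 1)) :
    shMap (SimplexCategory.σ i) = SimplexCategory.σ i.succ := by
  refine sh_ext _ _ ?_ (fun j => ?_)
  · rfl
  · exact (Fin.succ_predAbove_succ i j).symm

/-- The décalage. -/
def Dec (K : SSet.{0}) : SSet.{0} where
  obj n := K.obj (Opposite.op (SimplexCategory.mk (n.unop.len + 1)))
  map φ := K.map (shMap φ.unop).op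
  map_id n := by
    change K.map (shMap (𝟙 _)).op = _
    rw [shMap_id]; exact K.map_id _
  map_comp φ ψ := by
    change K.map (shMap (_ ≫ _)).op = _
    rw [shMap_comp]; exact K.map_comp _ _

/-- The contraction operators on the shifted simplices. -/
def thMap {a : SimplexCategory} (t : a ⟶ SimplexCategory.mk 1) :
    SimplexCategory.mk (a.len + 1) ⟶ SimplexCategory.mk (a.len + 1) :=
  SimplexCategory.Hom.mk
    { toFun := Fin.cases 0 (fun i => if t.toOrderHom i = 1 then i.succ else 0)
      monotone' := by
        intro i j hij
        induction i using Fin.cases with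
        | zero => exact Fin.zero_le _
        | succ i =>
          induction j using Fin.cases with
          | zero => exact absurd hij (by simp)
          | succ j =>
            have hij' : i ≤ j := by simpa using hij
            have ht : t.toOrderHom i ≤ t.toOrderHom j := t.toOrderHom.monotone hij'
            have hh : ∀ x y : Fin 2, x ≤ y → x = 1 → y = 1 := by decide
            simp only [Fin.cases_succ]
            by_cases h1 : t.toOrderHom i = 1
            · rw [if_pos h1, if_pos (hh _ _ ht h1)]
              exact hij
            · rw [if_neg h1]
              exact Fin.zero_le _ }

theorem thMap_succ {a : SimplexCategory} (t : a ⟶ SimplexCategory.mk 1) (i : Fin (a.len + 1)) :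
    (thMap t).toOrderHom i.succ = if t.toOrderHom i = 1 then i.succ else 0 := rfl

theorem thMap_nat {a b : SimplexCategory} (φ : a ⟶ b) (t : b ⟶ SimplexCategory.mk 1) :
    shMap φ ≫ thMap t = thMap (φ ≫ t) ≫ shMap φ := by
  refine sh_ext _ _ rfl (fun i => ?_)
  change (if t.toOrderHom (φ.toOrderHom i) = 1 then (φ.toOrderHom i).succ else 0) =
    (shMap φ).toOrderHom (if t.toOrderHom (φ.toOrderHom i) = 1 then i.succ else 0)
  split_ifs <;> rfl

theorem map_op_comp (K : SSet.{0}) {a b c : SimplexCategory} (φ : a ⟶ b) (ψ : b ⟶ c)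
    (x : K.obj (Opposite.op c)) : K.map φ.op (K.map ψ.op x) = K.map (φ ≫ ψ).op x := by
  rw [op_comp, K.map_comp]; rfl

/-- The contraction of the décalage. -/
def decH (K : SSet.{0}) : Dec K ⊗ Δ[1] ⟶ Dec K where
  app n := ↾fun c => K.map (thMap (SSet.stdSimplex.objEquiv c.2)).op c.1
  naturality n m φ := by
    ext c
    change K.map (thMap (φ.unop ≫ SSet.stdSimplex.objEquiv c.2)).op (K.map (shMap φ.unop).op c.1) =
      K.map (shMap φ.unop).op (K.map (thMap (SSet.stdSimplex.objEquiv c.2)).op c.1)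
    refine (map_op_comp K _ _ _).trans (Eq.trans ?_ (map_op_comp K _ _ _).symm)
    rw [thMap_nat]

theorem decH_one (K : SSet.{0}) (n) (x : (Dec K).obj n) : (decH K).app n (x, ct 1 n) = x := by
  change K.map (thMap (SSet.stdSimplex.objEquiv (ct 1 n))).op x = x
  have : thMap (SSet.stdSimplex.objEquiv (ct 1 n)) = 𝟙 _ :=
    sh_ext _ _ rfl (fun i => (thMap_succ _ i).trans (if_pos rfl))
  rw [this, op_id, K.map_id]
  rfl

theorem decH_zero (K : SSet.{0}) (hK₀' : Subsingleton (K _⦋0⦌)) (n) (x x' : (Dec K).obj n) :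
    (decH K).app n (x, ct 0 n) = (decH K).app n (x', ct 0 n) := by
  change K.map (thMap (SSet.stdSimplex.objEquiv (ct 0 n))).op x =
    K.map (thMap (SSet.stdSimplex.objEquiv (ct 0 n))).op x'
  have : thMap (SSet.stdSimplex.objEquiv (ct 0 n)) =
      SimplexCategory.const _ (SimplexCategory.mk 0) 0 ≫ SimplexCategory.const _ _ 0 :=
    sh_ext _ _ rfl (fun i => (thMap_succ _ i).trans (if_neg (by change ¬ ((0 : Fin 2) = 1); decide)))
  rw [this]
  refine (map_op_comp K _ _ _).symm.trans (Eq.trans ?_ (map_op_comp K _ _ _))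
  exact congrArg _ (Subsingleton.elim _ _)

end HopfModel

namespace HopfModel

open MonoidalCategory

section
variable {K : SSet.{0}} {GK : SimplicialObject GrpCat.{0}} {ζ : TwistingFunction K GK}
    {P : SSet.{0}} {p : P ⟶ K} (T : TCP GK (uSSet GK) K (leftMulAction GK) ζ P p)

/-- The map `(g, x) ↦ (τ(x) g, d₀ x)` in degree `n`. -/
def piFun (n : ℕ) (g : (GK _⦋n⦌ : Type)) (x : K _⦋n + 1⦌) : P _⦋n⦌ :=
  (T.e n).symm ((ζ.map n x * g : (GK _⦋n⦌ : Type)), K.δ 0 x)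

theorem e_piFun (n : ℕ) (g : (GK _⦋n⦌ : Type)) (x : K _⦋n + 1⦌) :
    T.e n (piFun T n g x) = ((ζ.map n x * g : (GK _⦋n⦌ : Type)), K.δ 0 x) :=
  (T.e n).apply_symm_apply _

theorem piFun_δ (n : ℕ) (i : Fin (n + 2)) (g : (GK _⦋n + 1⦌ : Type)) (x : K _⦋n + 2⦌) :
    piFun T n (δHom GK i g) (K.δ i.succ x) = P.δ i (piFun T (n + 1) g x) := by
  apply (T.e n).injective
  rw [e_piFun]
  induction i using Fin.cases with
  | zero =>
    rw [T.e_δ₀, e_piFun]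
    refine Prod.ext ?_ ?_
    · change ζ.map n (K.δ 1 x) * δHom GK 0 g =
        ζ.map n (K.δ 0 x) * δHom GK 0 (ζ.map (n+1) x * g)
      have : δHom GK 0 (ζ.map (n+1) x) = (ζ.map n (K.δ 0 x))⁻¹ * ζ.map n (K.δ 1 x) := ζ.map_δ₀ n x
      rw [map_mul, this]
      group
    · change K.δ 0 (K.δ 1 x) = K.δ 0 (K.δ 0 x)
      exact (ConcreteCategory.congr_hom (K.δ_comp_δ_self (i := (0 : Fin (n+2)))) x).symm
  | succ j =>
    rw [T.e_δ, e_piFun]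
    refine Prod.ext ?_ ?_
    · change ζ.map n (K.δ j.succ.succ x) * δHom GK j.succ g =
        δHom GK j.succ (ζ.map (n+1) x * g)
      have : δHom GK j.succ (ζ.map (n+1) x) = ζ.map n (K.δ j.succ.succ x) := ζ.map_δ n j x
      rw [map_mul, this]
    · change K.δ 0 (K.δ j.succ.succ x) = K.δ j.succ (K.δ 0 x)
      exact (ConcreteCategory.congr_hom (K.δ_comp_δ (i := (0 : Fin (n+2))) (j := j.succ)
        (Fin.zero_le _)) x)

theorem piFun_σ (n : ℕ) (i : Fin (n + 1)) (g : (GK _⦋n⦌ : Type)) (x : K _⦋n + 1⦌) :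
    piFun T (n + 1) (σHom GK i g) (K.σ i.succ x) = P.σ i (piFun T n g x) := by
  apply (T.e (n+1)).injective
  rw [e_piFun, T.e_σ, e_piFun]
  refine Prod.ext ?_ ?_
  · change ζ.map (n+1) (K.σ i.succ x) * σHom GK i g =
        σHom GK i (ζ.map n x * g)
    have : σHom GK i (ζ.map n x) = ζ.map (n+1) (K.σ i.succ x) := ζ.map_σ n i x
    rw [map_mul, this]
  · change K.δ 0 (K.σ i.succ x) = K.σ i (K.δ 0 x)
    exact (ConcreteCategory.congr_hom (K.δ_comp_σ_of_le (i := (0 : Fin (n+2))) (j := i)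
        (Fin.zero_le _)) x)

/-- The naturality property. -/
def piNat : MorphismProperty SimplexCategory := fun a b φ =>
  ∀ (g : (GK.obj (Opposite.op b) : Type)) (x : K.obj (Opposite.op (SimplexCategory.mk (b.len + 1)))),
    piFun T a.len ((GK.map φ.op).hom g) (K.map (shMap φ).op x) = P.map φ.op (piFun T b.len g x)

theorem piNat_eq_top : piNat T = ⊤ := by
  have : (piNat T).IsMultiplicative :=
    { id_mem := by
        intro a g x
        rw [shMap_id, op_id, op_id, K.map_id, P.map_id, GK.map_id]
        rfl
      comp_mem := by
        intro a b c φ ψ h1 h2 g x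
        rw [shMap_comp]
        have e1 : (GK.map (φ ≫ ψ).op).hom g = (GK.map φ.op).hom ((GK.map ψ.op).hom g) := by
          rw [op_comp, GK.map_comp]; rfl
        rw [e1, ← map_op_comp K, h1]
        refine Eq.trans ?_ (map_op_comp P φ ψ _)
        exact congrArg _ (h2 g x) }
  refine SimplexCategory.morphismProperty_eq_top _ ?_ ?_
  · intro n i g x
    rw [shMap_δ]
    exact piFun_δ T n i g x
  · intro n i g x
    rw [shMap_σ]
    exact piFun_σ T n i g x

/-- The map `(g, x) ↦ (τ(x) g, d₀ x)`. -/
def piMap : uSSet GK ⊗ Dec K ⟶ P where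
  app n := ↾fun c => piFun T n.unop.len c.1 c.2
  naturality n m φ := by
    ext c
    have : piNat T φ.unop := by rw [piNat_eq_top]; trivial
    exact this c.1 c.2

/-- The contraction of the total space. -/
def totH (G K : SSet.{0}) : (G ⊗ Dec K) ⊗ Δ[1] ⟶ G ⊗ Dec K where
  app n := ↾fun c => (c.1.1, (decH K).app n (c.1.2, c.2))
  naturality n m φ := by
    ext c
    exact Prod.ext rfl (nat_app_prod (decH K) φ c.1.2 c.2).symm

theorem e_deg (k0 : K _⦋0⦌) (n : ℕ) (φ : SimplexCategory.mk n ⟶ SimplexCategory.mk 0) :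
    T.e n (P.map φ.op ((T.e 0).symm ((1 : (GK _⦋0⦌ : Type)), k0))) =
      ((1 : (GK _⦋n⦌ : Type)), K.map φ.op k0) := by
  induction n with
  | zero =>
    have : φ = 𝟙 _ := Subsingleton.elim _ _
    rw [this, op_id, P.map_id, K.map_id]
    exact (T.e 0).apply_symm_apply _
  | succ n ih =>
    let φ' : SimplexCategory.mk n ⟶ SimplexCategory.mk 0 := SimplexCategory.const _ _ 0
    have : φ = SimplexCategory.σ 0 ≫ φ' := Subsingleton.elim _ _
    rw [this, ← map_op_comp, ← map_op_comp]
    refine (T.e_σ n 0 _).trans ?_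
    rw [ih φ']
    exact Prod.ext (map_one (σHom GK 0)) rfl

end

theorem main_lift (K : SSet.{0}) (k0 : K _⦋0⦌) (hK₀' : Subsingleton (K _⦋0⦌))
    (GK : SimplicialObject GrpCat.{0}) (ζ : TwistingFunction K GK)
    (ψ : ∀ n : ℕ, PresentedGroup (loopRels K n) ≃* (GK _⦋n⦌ : Type))
    (hψ : ∀ (n : ℕ) (x : K _⦋n + 1⦌), ψ n (PresentedGroup.of x) = ζ.map n x)
    (P : SSet.{0}) (p : P ⟶ K) (T : TCP GK (uSSet GK) K (leftMulAction GK) ζ P p) :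
    ∀ (X S : SSet.{0}) (q : X ⟶ S), IsKanFibration q → ∀ (v : P ⟶ S) (x : X _⦋0⦌),
      q.app _ x = v.app _ ((T.e 0).symm ((1 : (GK _⦋0⦌ : Type)), k0)) → ∃ l : P ⟶ X, l ≫ q = v := by
  have hds : ∀ (n : ℕ) (c : K _⦋n⦌), K.δ 0 (K.σ 0 c) = c := fun n c =>
    ConcreteCategory.congr_hom (K.δ_comp_σ_self (i := (0 : Fin (n+1)))) c
  have hth : ∀ n : ℕ, ∃ θ : (GK _⦋n⦌ : Type) →* FreeGroup {a : K _⦋n+1⦌ //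
      a ∉ Set.range (fun c : K _⦋n⦌ => K.σ 0 c)}, ∀ a, θ (ζ.map n a.1) = FreeGroup.of a :=
    fun n => exists_theta (fun c : K _⦋n⦌ => K.σ 0 c) (ζ.map n) (ψ n) (hψ n)
  choose θ hθ using hth
  let bp : ∀ n : ℕ, K _⦋n⦌ := fun n =>
    K.map (SimplexCategory.const (SimplexCategory.mk n) (SimplexCategory.mk 0) 0).op k0
  let e0 := ((T.e 0).symm ((1 : (GK _⦋0⦌ : Type)), k0))
  let f : uSSet GK ⊗ Dec K ⟶ uSSet GK := CartesianMonoidalCategory.fst _ _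
  let Down : ∀ n : SimplexCategoryᵒᵖ, (uSSet GK ⊗ Dec K).obj n → Prop := fun n c =>
    DownP (fun c : K _⦋n.unop.len⦌ => K.σ 0 c) (fun a : K _⦋n.unop.len + 1⦌ => K.δ 0 a)
      (θ n.unop.len) (bp n.unop.len) c.1 c.2
  -- equality in the total space
  have hpi : ∀ (n : ℕ) (g g' : (GK _⦋n⦌ : Type)) (x x' : K _⦋n + 1⦌),
      piFun T n g x = piFun T n g' x' ↔
        ζ.map n x * g = ζ.map n x' * g' ∧ K.δ 0 x = K.δ 0 x' := by
    intro n g g' x x'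
    rw [← (T.e n).injective.eq_iff, e_piFun, e_piFun]
    exact Prod.ext_iff
  have hE0 : ∀ (n : ℕ) (g : (GK _⦋n⦌ : Type)) (x : K _⦋n + 1⦌),
      piFun T n g x ∈ (SSet.Subcomplex.ofSimplex e0).obj (Opposite.op (SimplexCategory.mk n)) ↔
        ζ.map n x * g = 1 ∧ K.δ 0 x = bp n := by
    intro n g x
    rw [SSet.Subcomplex.mem_ofSimplex_obj_iff]
    constructor
    · rintro ⟨φ, hφ⟩
      have h1 := e_deg T k0 n φ
      have h2 := congrArg (T.e n) hφ
      rw [e_piFun] at h2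
      have h3 := h2.symm.trans h1
      have h4 : φ = SimplexCategory.const _ _ 0 := Subsingleton.elim _ _
      rw [h4] at h3
      exact Prod.ext_iff.1 h3
    · rintro ⟨h1, h2⟩
      refine ⟨SimplexCategory.const _ _ 0, (T.e n).injective ?_⟩
      rw [e_piFun]
      refine (e_deg T k0 n _).trans ?_
      exact Prod.ext h1.symm h2.symm
  have hσ₀ : ∀ (n : ℕ) (b : K _⦋n⦌), ζ.map n (K.σ 0 b) = 1 := ζ.map_σ₀
  have hsurj : ∀ (n : ℕ) (e : P _⦋n⦌), piFun T n (T.e n e).1 (K.σ 0 (T.e n e).2) = e := by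
    intro n e
    apply (T.e n).injective
    refine (e_piFun T n _ _).trans (Prod.ext ?_ (hds n _))
    have h1 : ∀ g : (GK _⦋n⦌ : Type), ζ.map n (K.σ 0 (T.e n e).2) * g = g := by
      intro g
      rw [hσ₀, one_mul]
    exact h1 _
  have hpull : ∀ (n : ℕ) (k : ℕ) (g g' : (GK _⦋n⦌ : Type)) (x x' : K _⦋n + 1⦌),
      piFun T n g x = piFun T n g' x' →
      g ∈ (GLay f (piMap T) e0 k).obj (Opposite.op (SimplexCategory.mk n)) →
      g' ∈ (GLay f (piMap T) e0 (k+1)).obj (Opposite.op (SimplexCategory.mk n)) := by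
    intro n k g g' x x' e hg
    have h1 : piFun T n g x ∈ (ELay f (piMap T) e0 k).obj (Opposite.op (SimplexCategory.mk n)) :=
      EL_of_GL f (piMap T) e0 k (Opposite.op (SimplexCategory.mk n)) (g, x) hg
    rw [e] at h1
    exact GL_of_EL f (piMap T) e0 k (Opposite.op (SimplexCategory.mk n)) (g', x') h1
  have hgen : ∀ (n : ℕ) (g : (GK _⦋n⦌ : Type)), ∃ k,
      g ∈ (GLay f (piMap T) e0 k).obj (Opposite.op (SimplexCategory.mk n)) := by
    intro n g
    induction g using gen_induction (ζ.map n) (loopRels K n) (ψ n) (hψ n) with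
    | h1 =>
      refine ⟨1, ?_⟩
      refine GL_of_EL f (piMap T) e0 0 (Opposite.op (SimplexCategory.mk n))
        ((1 : (GK _⦋n⦌ : Type)), K.σ 0 (bp n)) ?_
      refine (hE0 n 1 (K.σ 0 (bp n))).2 ⟨?_, hds _ _⟩
      rw [hσ₀, one_mul]
    | hm a g ih =>
      obtain ⟨k, hk⟩ := ih
      refine ⟨k+1, hpull n k g _ a (K.σ 0 (K.δ 0 a)) ?_ hk⟩
      rw [hpi, hσ₀, one_mul, hds]
      exact ⟨rfl, rfl⟩
    | hi a g ih =>
      obtain ⟨k, hk⟩ := ih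
      refine ⟨k+1, hpull n k g _ (K.σ 0 (K.δ 0 a)) a ?_ hk⟩
      rw [hpi, hσ₀, one_mul, hds, mul_inv_cancel_left]
      exact ⟨rfl, rfl⟩
  refine tree_lift f (piMap T) e0 Down ?_ ?_ ?_ ?_ (totH (uSSet GK) K) ?_ ?_ ?_ ?_
  · rintro n ⟨g, x⟩ ⟨g', x'⟩ h h' e
    have e : g = g' := e
    subst e
    exact Prod.ext rfl (downP1 (G := (GK _⦋n.unop.len⦌ : Type)) _ _ _ _ g x x' h h')
  · rintro n ⟨g, x⟩ ⟨g', x'⟩ h h' e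
    obtain ⟨e1, e2⟩ := (hpi n.unop.len g g' x x').1 e
    obtain ⟨e3, e4⟩ := downP2 (fun c : K _⦋n.unop.len⦌ => K.σ 0 c)
      (fun a : K _⦋n.unop.len + 1⦌ => K.δ 0 a) (hds _) (ζ.map _) (hσ₀ _)
      (θ n.unop.len) (hθ _) (bp n.unop.len) g g' x x' h h' e1 e2
    exact Prod.ext e3 e4
  · rintro n ⟨g, x⟩ h
    obtain ⟨e1, e2⟩ := (hE0 n.unop.len g x).1 h
    exact downP3 (fun c : K _⦋n.unop.len⦌ => K.σ 0 c)
      (fun a : K _⦋n.unop.len + 1⦌ => K.δ 0 a) (hds _) (ζ.map _) (hσ₀ _)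
      (θ n.unop.len) (hθ _) (bp n.unop.len) g x e1 e2
  · intro n e
    exact ⟨(_, _), hsurj n.unop.len e⟩
  · rintro n ⟨g, x⟩
    exact Prod.ext rfl (decH_one K n x)
  · intro n b t
    rfl
  · rintro n ⟨g, x⟩ ⟨g', x'⟩ e
    exact Prod.ext e (decH_zero K hK₀' n x x')
  · intro n e
    obtain ⟨k, hk⟩ := hgen n.unop.len (T.e n.unop.len e).1
    refine ⟨k, ?_⟩
    have h1 : piFun T n.unop.len (T.e n.unop.len e).1 (K.σ 0 (T.e n.unop.len e).2) ∈
        (ELay f (piMap T) e0 k).obj n :=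
      EL_of_GL f (piMap T) e0 k n ((T.e n.unop.len e).1, K.σ 0 (T.e n.unop.len e).2) hk
    have h2 := hsurj n.unop.len e
    rw [h2] at h1
    exact h1

end HopfModel

open HopfModel in
/-- Let `K` be a reduced simplicial set (exactly one `0`-simplex), and let
`GK` be (a simplicial group isomorphic to) the loop group `G(K)` — i.e. each `GKₙ` is the
free group on `K_{n+1}` modulo `s₀x = e` and the canonical map `τ = ζ` is a twisting
function. Then the principal twisted cartesian product `G(K) ×_τ K` is acyclic: its
geometric realization is weakly contractible (nonempty, with all homotopy groups trivial). -/
theorem ptcp_loopGrp_weakly_contractible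
    (K : SSet.{0}) (hK₀ : Nonempty (K _⦋0⦌)) (hK₀' : Subsingleton (K _⦋0⦌))
    (GK : SimplicialObject GrpCat) (ζ : TwistingFunction K GK)
    (ψ : ∀ n : ℕ, PresentedGroup (loopRels K n) ≃* (GK _⦋n⦌ : Type))
    (hψ : ∀ (n : ℕ) (x : K _⦋n + 1⦌), ψ n (PresentedGroup.of x) = ζ.map n x)
    (P : SSet) (p : P ⟶ K) (T : TCP GK (uSSet GK) K (leftMulAction GK) ζ P p) :
    Nonempty (SSet.toTop.obj P) ∧
    ∀ (n : ℕ) (x : SSet.toTop.obj P),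
      Subsingleton (HomotopyGroup (Fin n) (SSet.toTop.obj P) x) := by
  obtain ⟨k0⟩ := hK₀
  obtain ⟨x0, H, hH, hH0, hH1⟩ := contraction_of_lift P _
    (main_lift K k0 hK₀' GK ζ ψ hψ P p T)
  exact ⟨⟨x0⟩, fun n x => subsingleton_homotopyGroup x0 H hH hH0 hH1 n x⟩
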